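/- arXiv:1310.1654 — 3 statements merged into one kernel-verified Lean document; each statement's English description precedes it below -/
import Mathlib

section
/- There exist universal constants c̃ > 0, γ₁ > 0, γ₂ > 0 such that the following holds. Let A be an n × k random matrix with i.i.d. N(0,1) entries, where k ≤ n/16. Then with probability at least 1 − 2e^{−n/32} − γ₁e^{−γ₂·n}, every nonzero x ∈ ℝᵏ satisfies ‖Ax‖₁ ≥ c̃·(n/√k)·‖x‖₁. -/
open MeasureTheory ProbabilityTheory Real

/-- ℓ¹ norm of a vector in ℝᵐ. -/
noncomputable def l1 {m : ℕ} (x : Fin m → ℝ) : ℝ := ∑ i, |x i|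

/-- Law of an `n × k` random matrix with i.i.d. N(0,1) entries. -/
noncomputable def stdGaussianMatrix (n k : ℕ) : Measure (Fin n → Fin k → ℝ) :=
  Measure.pi fun _ => Measure.pi fun _ => gaussianReal 0 1

/-!
The proof is a net argument, with all thresholds numerical.  Write `|·|₁`, `|·|₂` for the ℓ¹ and
Euclidean norms.

* If `|u|₂ = 1`, the coordinates of `A u` are i.i.d. N(0,1) (`map_dot_gaussian`), so exponential
  Markov bounds (`chernoff`) give `P(|A u|₁ ≤ n/10) ≤ (3/10)^n` (small ball, because
  `E exp(-10|g|) ≤ 1/10`) and `P(|A u|₁ ≥ 3n) ≤ (3/10)^n` (because `E exp(|g|) ≤ 2 exp(1/2)`).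
* The net consists of the integer vectors `w` with `|w|₁ ≤ 41 k`.  There are at most
  `256^k ≤ 2^(n/2)` of them (`card_net_le`), and there are `2^k` sign vectors.  By a union bound,
  outside an event of probability at most `2 (3/5)^n`, `|A w|₁ ≥ (n/10) |w|₂` for every `w` in the
  net and `|A s|₁ ≤ 3 n √k` for every sign vector `s`.
* On that event (`deterministic`), rescale `x` to `|y|₁ = 41 k` and truncate `y` to an integer
  vector `w`.  Then `|w|₁ ≥ 40 k`, so `|w|₂ ≥ 40 √k` and `|A w|₁ ≥ 4 n √k`.  The error `y - w` lies
  in the unit cube, on which `|A ·|₁` is at most its maximum over sign vectors, `3 n √k`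
  (`l1_cube_le`).  Hence `|A y|₁ ≥ n √k`, which gives the constant `1/41`.
-/

/-- A unit linear functional of a standard Gaussian vector is standard Gaussian. -/
lemma map_dot_gaussian {k : ℕ} (u : Fin k → ℝ) (hu : ∑ j, u j ^ 2 = 1) :
    (Measure.pi fun _ : Fin k => gaussianReal 0 1).map (fun a => ∑ j, a j * u j)
      = gaussianReal 0 1 := by
  have hm : Measurable (fun a : Fin k → ℝ => ∑ j, a j * u j) := by fun_prop
  have : IsProbabilityMeasure
      ((Measure.pi fun _ : Fin k => gaussianReal 0 1).map (fun a => ∑ j, a j * u j)) :=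
    Measure.isProbabilityMeasure_map hm.aemeasurable
  apply Measure.ext_of_charFun
  ext t
  rw [charFun_apply_real, integral_map hm.aemeasurable (by fun_prop)]
  have h1 : ∀ a : Fin k → ℝ, Complex.exp (t * ((∑ j, a j * u j : ℝ) : ℂ) * Complex.I)
      = ∏ j, Complex.exp (((t * u j : ℝ) : ℂ) * (a j : ℂ) * Complex.I) := by
    intro a
    rw [← Complex.exp_sum]
    congr 1
    push_cast
    rw [Finset.mul_sum, Finset.sum_mul]
    refine Finset.sum_congr rfl fun j _ => by ring
  simp_rw [h1]
  rw [integral_fintype_prod_eq_prod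
    (f := fun j (x : ℝ) => Complex.exp (((t * u j : ℝ) : ℂ) * (x : ℂ) * Complex.I))]
  simp_rw [← charFun_apply_real, charFun_gaussianReal]
  rw [← Complex.exp_sum]
  congr 1
  have h2 : (∑ j, (u j : ℂ) ^ 2) = 1 := by exact_mod_cast hu
  simp only [Complex.ofReal_zero, mul_zero, zero_mul, zero_sub, NNReal.coe_one,
    Complex.ofReal_one, one_mul, Complex.ofReal_mul, mul_pow]
  rw [Finset.sum_neg_distrib, ← Finset.sum_div, ← Finset.mul_sum, h2, mul_one]

instance (n k : ℕ) : IsProbabilityMeasure (stdGaussianMatrix n k) := by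
  unfold stdGaussianMatrix; infer_instance

/-- Markov's inequality for a product over the rows of `A`, which are independent. -/
lemma chernoff {n k : ℕ} (u : Fin k → ℝ) (hu : ∑ j, u j ^ 2 = 1) (φ : ℝ → ℝ)
    (hφc : Continuous φ) (hφ : ∀ x, 0 ≤ φ x) (hi : Integrable φ (gaussianReal 0 1)) (ρ : ℝ)
    (hρ : ∫ x, φ x ∂(gaussianReal 0 1) ≤ ρ) :
    (stdGaussianMatrix n k).real {A | 1 ≤ ∏ i, φ (∑ j, A i j * u j)} ≤ ρ ^ n := by
  have hm : Measurable (fun a : Fin k → ℝ => ∑ j, a j * u j) := by fun_prop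
  have hlaw := map_dot_gaussian u hu
  have hgi : Integrable (fun a : Fin k → ℝ => φ (∑ j, a j * u j))
      (Measure.pi fun _ : Fin k => gaussianReal 0 1) := by
    rw [← hlaw] at hi
    exact hi.comp_measurable hm
  have hint : ∫ a : Fin k → ℝ, φ (∑ j, a j * u j) ∂(Measure.pi fun _ => gaussianReal 0 1)
      = ∫ x, φ x ∂(gaussianReal 0 1) := by
    conv_rhs => rw [← hlaw, integral_map hm.aemeasurable (by fun_prop)]
  have hI : Integrable (fun A : Fin n → Fin k → ℝ => ∏ i, φ (∑ j, A i j * u j))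
      (stdGaussianMatrix n k) := by
    unfold stdGaussianMatrix
    exact Integrable.fintype_prod (f := fun (_ : Fin n) (a : Fin k → ℝ) => φ (∑ j, a j * u j))
      (fun _ => hgi)
  have hM := mul_meas_ge_le_integral_of_nonneg (μ := stdGaussianMatrix n k)
    (Filter.Eventually.of_forall fun A => Finset.prod_nonneg fun i _ => hφ _) hI 1
  rw [one_mul] at hM
  refine hM.trans ?_
  unfold stdGaussianMatrix
  rw [integral_fintype_prod_eq_pow (fun a : Fin k → ℝ => φ (∑ j, a j * u j)), hint,
    Fintype.card_fin]
  exact pow_le_pow_left₀ (integral_nonneg hφ) hρ n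

lemma integral_exp_neg_ten_abs : ∫ x : ℝ, rexp (-10 * |x|) = 1 / 5 := by
  rw [integral_comp_abs (f := fun x => rexp (-10 * x)),
    integral_exp_mul_Ioi (by norm_num : (-10 : ℝ) < 0)]
  norm_num

lemma gaussianPDFReal_le_half (x : ℝ) : gaussianPDFReal 0 1 x ≤ 1 / 2 := by
  rw [gaussianPDFReal_def]
  have h1 : (2 : ℝ) ≤ √(2 * π * (1 : NNReal)) := by
    apply Real.le_sqrt_of_sq_le
    have := Real.pi_gt_three
    simp only [NNReal.coe_one]
    linarith
  have h2 : rexp (-(x - 0) ^ 2 / (2 * (1 : NNReal))) ≤ 1 := by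
    rw [Real.exp_le_one_iff]
    simp only [NNReal.coe_one]
    nlinarith [sq_nonneg (x - 0)]
  calc _ ≤ (2 : ℝ)⁻¹ * 1 :=
        mul_le_mul (inv_anti₀ two_pos h1) h2 (Real.exp_pos _).le (by norm_num)
    _ = 1 / 2 := by norm_num

/-- The exponential moment behind the small ball estimate. -/
lemma small_moment : ∫ x, rexp (1 - 10 * |x|) ∂(gaussianReal 0 1) ≤ 3 / 10 := by
  rw [integral_gaussianReal_eq_integral_smul one_ne_zero]
  -- a nonzero Bochner integral forces integrability
  have hi : Integrable (fun x : ℝ => rexp (-10 * |x|)) := by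
    by_contra h
    have := integral_undef h
    rw [integral_exp_neg_ten_abs] at this
    norm_num at this
  have hle : ∀ x : ℝ, gaussianPDFReal 0 1 x • rexp (1 - 10 * |x|)
      ≤ (1 / 2 * rexp 1) * rexp (-10 * |x|) := by
    intro x
    rw [smul_eq_mul, mul_assoc, ← Real.exp_add, show 1 + -10 * |x| = 1 - 10 * |x| by ring]
    exact mul_le_mul_of_nonneg_right (gaussianPDFReal_le_half x) (Real.exp_pos _).le
  calc _ ≤ ∫ x : ℝ, (1 / 2 * rexp 1) * rexp (-10 * |x|) :=
        integral_mono_of_nonneg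
          (Filter.Eventually.of_forall fun x =>
            mul_nonneg (gaussianPDFReal_nonneg 0 1 x) (Real.exp_pos _).le)
          (hi.const_mul _) (Filter.Eventually.of_forall hle)
    _ = (1 / 2 * rexp 1) * (1 / 5) := by rw [integral_const_mul, integral_exp_neg_ten_abs]
    _ ≤ 3 / 10 := by linarith [Real.exp_one_lt_d9]

lemma small_integrable : Integrable (fun x => rexp (1 - 10 * |x|)) (gaussianReal 0 1) := by
  refine Integrable.of_bound (C := rexp 1) (by fun_prop) (Filter.Eventually.of_forall fun x => ?_)
  rw [Real.norm_eq_abs, Real.abs_exp]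
  exact Real.exp_le_exp.2 (by linarith [abs_nonneg x])

lemma exp_abs_le (x : ℝ) :
    rexp (|x| - 3) ≤ rexp (-3) * (rexp (1 * x) + rexp (-1 * x)) := by
  rw [show |x| - 3 = -3 + |x| by ring, Real.exp_add]
  gcongr
  rcases abs_cases x with ⟨h, _⟩ | ⟨h, _⟩ <;> rw [h]
  · rw [one_mul]; linarith [Real.exp_pos (-1 * x)]
  · rw [neg_one_mul]; linarith [Real.exp_pos (1 * x)]

lemma large_dom_integrable : Integrable
    (fun x => rexp (-3) * (rexp (1 * x) + rexp (-1 * x))) (gaussianReal 0 1) :=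
  ((integrable_exp_mul_gaussianReal 1).add (integrable_exp_mul_gaussianReal (-1))).const_mul _

lemma large_integrable : Integrable (fun x => rexp (|x| - 3)) (gaussianReal 0 1) := by
  refine large_dom_integrable.mono' (by fun_prop) (Filter.Eventually.of_forall fun x => ?_)
  rw [Real.norm_eq_abs, Real.abs_exp]
  exact exp_abs_le x

/-- The exponential moment behind the upper tail estimate. -/
lemma large_moment : ∫ x, rexp (|x| - 3) ∂(gaussianReal 0 1) ≤ 3 / 10 := by
  have hmgf : ∀ t : ℝ, ∫ x, rexp (t * x) ∂(gaussianReal 0 1) = rexp (t ^ 2 / 2) := by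
    intro t
    have := congrFun (mgf_id_gaussianReal (μ := 0) (v := 1)) t
    simpa [mgf] using this
  calc _ ≤ ∫ x, rexp (-3) * (rexp (1 * x) + rexp (-1 * x)) ∂(gaussianReal 0 1) :=
        integral_mono large_integrable large_dom_integrable exp_abs_le
    _ = rexp (-3) * (rexp (1 ^ 2 / 2) + rexp ((-1) ^ 2 / 2)) := by
        rw [integral_const_mul, integral_add (integrable_exp_mul_gaussianReal 1)
          (integrable_exp_mul_gaussianReal (-1)), hmgf, hmgf]
    _ = 2 * rexp (-(5 / 2)) := by
        rw [mul_add, ← Real.exp_add, ← Real.exp_add]; norm_num; ring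
    _ ≤ 3 / 10 := by
        -- `exp (5/2)` is at least `20/3`, since its square is `e ^ 5`
        have h5 : (20 / 3 : ℝ) ≤ rexp (5 / 2) := by
          apply le_of_sq_le_sq _ (Real.exp_pos _).le
          rw [← Real.exp_nat_mul, show ((2 : ℕ) : ℝ) * (5 / 2) = ((5 : ℕ) : ℝ) * 1 by norm_num,
            Real.exp_nat_mul]
          calc (20 / 3 : ℝ) ^ 2 ≤ 2.7 ^ 5 := by norm_num
            _ ≤ rexp 1 ^ 5 := by gcongr; linarith [Real.exp_one_gt_d9]
        rw [Real.exp_neg]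
        have := inv_anti₀ (by norm_num) h5
        norm_num at this ⊢
        linarith

/-- The vector `A x`, as it appears in the theorem. -/
def av {n k : ℕ} (A : Fin n → Fin k → ℝ) (x : Fin k → ℝ) : Fin n → ℝ := fun i => ∑ j, A i j * x j

lemma l1_nonneg {m : ℕ} (x : Fin m → ℝ) : 0 ≤ l1 x := Finset.sum_nonneg fun _ _ => abs_nonneg _

lemma l1_smul {m : ℕ} (c : ℝ) (x : Fin m → ℝ) : l1 (c • x) = |c| * l1 x := by
  simp [l1, abs_mul, Finset.mul_sum]

lemma l1_add_le {m : ℕ} (x y : Fin m → ℝ) : l1 (x + y) ≤ l1 x + l1 y := by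
  unfold l1
  rw [← Finset.sum_add_distrib]
  exact Finset.sum_le_sum fun i _ => abs_add_le _ _

lemma av_smul {n k : ℕ} (A : Fin n → Fin k → ℝ) (c : ℝ) (x : Fin k → ℝ) :
    av A (c • x) = c • av A x := by
  ext i
  simp only [av, Pi.smul_apply, smul_eq_mul, Finset.mul_sum]
  exact Finset.sum_congr rfl fun j _ => by ring

lemma av_add {n k : ℕ} (A : Fin n → Fin k → ℝ) (x y : Fin k → ℝ) :
    av A (x + y) = av A x + av A y := by
  ext i
  simp [av, mul_add, Finset.sum_add_distrib]

lemma small_prob {n k : ℕ} (w : Fin k → ℝ) :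
    (stdGaussianMatrix n k).real {A | l1 (av A w) < n / 10 * √(∑ j, w j ^ 2)} ≤ (3 / 10) ^ n := by
  rcases (Finset.sum_nonneg fun j _ => sq_nonneg (w j) : 0 ≤ ∑ j, w j ^ 2).eq_or_lt with h0 | h0
  · have : {A : Fin n → Fin k → ℝ | l1 (av A w) < n / 10 * √(∑ j, w j ^ 2)} = ∅ := by
      ext A
      simp [← h0, l1_nonneg]
    rw [this, measureReal_empty]
    positivity
  set σ := √(∑ j, w j ^ 2) with hσ
  have hσ0 : 0 < σ := Real.sqrt_pos.2 h0
  have hu : ∑ j, (σ⁻¹ • w) j ^ 2 = 1 := by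
    simp only [Pi.smul_apply, smul_eq_mul, mul_pow]
    rw [← Finset.mul_sum, ← Real.sq_sqrt h0.le, ← hσ, inv_pow]
    field_simp
  refine le_trans (measureReal_mono ?_ (measure_ne_top _ _)) (chernoff (n := n) (σ⁻¹ • w) hu
    (fun x => rexp (1 - 10 * |x|)) (by fun_prop) (fun x => (Real.exp_pos _).le)
    small_integrable _ small_moment)
  intro A hA
  simp only [Set.mem_ofPred_eq] at hA ⊢
  have h1 : l1 (av A (σ⁻¹ • w)) < n / 10 := by
    rw [av_smul, l1_smul, abs_of_pos (inv_pos.2 hσ0), inv_mul_lt_iff₀ hσ0]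
    linarith
  rw [← Real.exp_sum, Real.one_le_exp_iff, Finset.sum_sub_distrib, ← Finset.mul_sum]
  simp only [Finset.sum_const, Finset.card_univ, Fintype.card_fin, nsmul_eq_mul, mul_one]
  unfold l1 av at h1
  linarith

lemma large_prob {n k : ℕ} (s : Fin k → ℝ) (hs : ∀ j, s j ^ 2 = 1) :
    (stdGaussianMatrix n k).real {A | 3 * n * √k < l1 (av A s)} ≤ (3 / 10) ^ n := by
  rcases Nat.eq_zero_or_pos k with rfl | hk
  · have : {A : Fin n → Fin 0 → ℝ | 3 * n * √(0 : ℕ) < l1 (av A s)} = ∅ := by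
      ext A
      simp [l1, av]
    rw [this, measureReal_empty]
    positivity
  have hk' : (0 : ℝ) < k := by exact_mod_cast hk
  have hσ0 : 0 < √(k : ℝ) := Real.sqrt_pos.2 hk'
  have hu : ∑ j, ((√(k : ℝ))⁻¹ • s) j ^ 2 = 1 := by
    simp only [Pi.smul_apply, smul_eq_mul, mul_pow, hs, inv_pow, Real.sq_sqrt hk'.le]
    simp [hk'.ne']
  refine le_trans (measureReal_mono ?_ (measure_ne_top _ _)) (chernoff (n := n) _ hu
    (fun x => rexp (|x| - 3)) (by fun_prop) (fun x => (Real.exp_pos _).le)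
    large_integrable _ large_moment)
  intro A hA
  simp only [Set.mem_ofPred_eq] at hA ⊢
  have h1 : 3 * n < l1 (av A ((√(k : ℝ))⁻¹ • s)) := by
    rw [av_smul, l1_smul, abs_of_pos (inv_pos.2 hσ0), lt_inv_mul_iff₀ hσ0]
    linarith
  rw [← Real.exp_sum, Real.one_le_exp_iff, Finset.sum_sub_distrib]
  simp only [Finset.sum_const, Finset.card_univ, Fintype.card_fin, nsmul_eq_mul]
  unfold l1 av at h1
  linarith

/-- The net: integer vectors of ℓ¹ norm at most `41 k`.  The box constraint follows from the norm
constraint and only serves to exhibit a `Finset`. -/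
noncomputable def net (k : ℕ) : Finset (Fin k → ℤ) :=
  (Fintype.piFinset fun _ => Finset.Icc (-(41 * k : ℕ) : ℤ) (41 * k : ℕ)).filter
    fun w => ∑ j, (w j).natAbs ≤ 41 * k

lemma sum_geom_int_le (N : ℕ) :
    ∑ z ∈ Finset.Icc (-(N : ℤ)) N, (41 / 42 : ℝ) ^ z.natAbs ≤ 84 := by
  classical
  set P := (Finset.range (N + 1)).image (fun j : ℕ => (j : ℤ))
  set M := (Finset.range (N + 1)).image (fun j : ℕ => -(j : ℤ))
  have hsub : Finset.Icc (-(N : ℤ)) N ⊆ P ∪ M := by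
    intro z hz
    rw [Finset.mem_Icc] at hz
    simp only [P, M, Finset.mem_union, Finset.mem_image, Finset.mem_range]
    rcases le_total 0 z with h | h
    · exact Or.inl ⟨z.natAbs, by omega, by omega⟩
    · exact Or.inr ⟨z.natAbs, by omega, by omega⟩
  have hgeom : ∑ j ∈ Finset.range (N + 1), (41 / 42 : ℝ) ^ j ≤ 42 := by
    rw [geom_sum_eq (by norm_num)]
    have : (0 : ℝ) ≤ (41 / 42) ^ (N + 1) := by positivity
    rw [div_le_iff_of_neg (by norm_num)]
    linarith
  have hP : ∑ z ∈ P, (41 / 42 : ℝ) ^ z.natAbs ≤ 42 := by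
    rw [Finset.sum_image (fun a _ b _ h => by simpa using h)]
    simpa using hgeom
  have hM : ∑ z ∈ M, (41 / 42 : ℝ) ^ z.natAbs ≤ 42 := by
    rw [Finset.sum_image (fun a _ b _ h => by simpa using h)]
    simpa using hgeom
  have hU := Finset.sum_union_inter (s₁ := P) (s₂ := M) (f := fun z => (41 / 42 : ℝ) ^ z.natAbs)
  have hI : 0 ≤ ∑ z ∈ P ∩ M, (41 / 42 : ℝ) ^ z.natAbs :=
    Finset.sum_nonneg fun _ _ => by positivity
  have := Finset.sum_le_sum_of_subset_of_nonneg (f := fun z => (41 / 42 : ℝ) ^ z.natAbs) hsub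
    (fun _ _ _ => by positivity)
  linarith

/-- Counting by generating function: with `t = 41/42`, every net point has weight
`t ^ |w|₁ ≥ t ^ (41 k) ≥ 3 ^ (-k)`, and the weights add up to at most `84 ^ k`. -/
lemma card_net_le (k : ℕ) : ((net k).card : ℝ) ≤ 256 ^ k := by
  have h1 : ∑ w ∈ net k, ∏ j, (41 / 42 : ℝ) ^ (w j).natAbs ≤ 84 ^ k := by
    calc _ ≤ ∑ w ∈ Fintype.piFinset fun _ : Fin k =>
          Finset.Icc (-(41 * k : ℕ) : ℤ) (41 * k : ℕ), ∏ j, (41 / 42 : ℝ) ^ (w j).natAbs :=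
          Finset.sum_le_sum_of_subset_of_nonneg (Finset.filter_subset _ _)
            fun _ _ _ => Finset.prod_nonneg fun _ _ => by positivity
      _ = ∏ _j : Fin k, ∑ z ∈ Finset.Icc (-(41 * k : ℕ) : ℤ) (41 * k : ℕ),
            (41 / 42 : ℝ) ^ z.natAbs :=
          (Finset.prod_univ_sum _ (fun _ (z : ℤ) => (41 / 42 : ℝ) ^ z.natAbs)).symm
      _ = (∑ z ∈ Finset.Icc (-(41 * k : ℕ) : ℤ) (41 * k : ℕ), (41 / 42 : ℝ) ^ z.natAbs) ^ k := by
          rw [Finset.prod_const, Finset.card_univ, Fintype.card_fin]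
      _ ≤ 84 ^ k := pow_le_pow_left₀ (Finset.sum_nonneg fun _ _ => by positivity)
          (sum_geom_int_le _) k
  have h2 : ((net k).card : ℝ) * (1 / 3) ^ k ≤ ∑ w ∈ net k, ∏ j, (41 / 42 : ℝ) ^ (w j).natAbs := by
    rw [← nsmul_eq_mul]
    refine Finset.card_nsmul_le_sum _ _ _ fun w hw => ?_
    have hw' : ∑ j, (w j).natAbs ≤ 41 * k := (Finset.mem_filter.1 hw).2
    rw [Finset.prod_pow_eq_pow_sum]
    calc (1 / 3 : ℝ) ^ k ≤ ((41 / 42) ^ 41) ^ k := by gcongr; norm_num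
      _ = (41 / 42) ^ (41 * k) := by rw [← pow_mul]
      _ ≤ _ := pow_le_pow_of_le_one (by norm_num) (by norm_num) hw'
  have h3 : (0 : ℝ) < 3 ^ k := by positivity
  have h4 : ((net k).card : ℝ) ≤ 84 ^ k * 3 ^ k := by
    have := h2.trans h1
    rw [one_div, inv_pow, ← div_eq_mul_inv, div_le_iff₀ h3] at this
    exact this
  refine h4.trans ?_
  rw [← mul_pow]
  gcongr
  norm_num

/-- The sign vector encoded by `b`. -/
def sgn {k : ℕ} (b : Fin k → Bool) : Fin k → ℝ := fun j => if b j then 1 else -1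

/-- On the unit cube, `|A z|₁` is at most its maximum over sign vectors: by duality
`|A z|₁ = ⟨u, A z⟩` with `u` the signs of `A z`, and `⟨Aᵀ u, z⟩ ≤ ⟨Aᵀ u, s⟩ ≤ |A s|₁` with `s` the
signs of `Aᵀ u`. -/
lemma l1_cube_le {n k : ℕ} (A : Fin n → Fin k → ℝ) (z : Fin k → ℝ) (hz : ∀ j, |z j| ≤ 1) (C : ℝ)
    (hC : ∀ b, l1 (av A (sgn b)) ≤ C) : l1 (av A z) ≤ C := by
  classical
  set u : Fin n → ℝ := fun i => if 0 ≤ av A z i then 1 else -1 with hu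
  have hu1 : ∀ i, |u i| = 1 := by
    intro i; simp only [hu]; split_ifs <;> simp
  have hu2 : ∀ i, |av A z i| = u i * av A z i := by
    intro i
    simp only [hu]
    split_ifs with h
    · rw [abs_of_nonneg h, one_mul]
    · rw [abs_of_neg (not_le.1 h), neg_one_mul]
  have hswap : ∀ x : Fin k → ℝ, ∑ i, u i * av A x i = ∑ j, (∑ i, u i * A i j) * x j := by
    intro x
    simp only [av, Finset.mul_sum, Finset.sum_mul]
    rw [Finset.sum_comm]
    exact Finset.sum_congr rfl fun j _ => Finset.sum_congr rfl fun i _ => by ring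
  let b : Fin k → Bool := fun j => decide (0 ≤ ∑ i, u i * A i j)
  calc l1 (av A z) = ∑ i, u i * av A z i := Finset.sum_congr rfl fun i _ => hu2 i
    _ = ∑ j, (∑ i, u i * A i j) * z j := hswap z
    _ ≤ ∑ j, (∑ i, u i * A i j) * sgn b j := by
        refine Finset.sum_le_sum fun j _ => ?_
        have h1 : (∑ i, u i * A i j) * sgn b j = |∑ i, u i * A i j| := by
          by_cases h : 0 ≤ ∑ i, u i * A i j
          · simp [sgn, b, h, abs_of_nonneg h]
          · simp [sgn, b, h, abs_of_neg (not_le.1 h)]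
        rw [h1]
        calc _ ≤ |(∑ i, u i * A i j) * z j| := le_abs_self _
          _ = |∑ i, u i * A i j| * |z j| := abs_mul _ _
          _ ≤ |∑ i, u i * A i j| * 1 := by gcongr; exact hz j
          _ = _ := mul_one _
    _ = ∑ i, u i * av A (sgn b) i := (hswap _).symm
    _ ≤ l1 (av A (sgn b)) := by
        refine Finset.sum_le_sum fun i _ => (le_abs_self _).trans ?_
        rw [abs_mul, hu1, one_mul]
    _ ≤ C := hC b

/-- Truncation towards zero. -/
lemma exists_trunc (y : ℝ) : ∃ z : ℤ, |(z : ℝ)| ≤ |y| ∧ |y - z| ≤ 1 := by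
  rcases le_total 0 y with h | h
  · refine ⟨⌊y⌋, ?_, ?_⟩
    · rw [abs_of_nonneg h, abs_of_nonneg (by exact_mod_cast Int.floor_nonneg.2 h)]
      exact Int.floor_le y
    · rw [abs_le]
      constructor <;> linarith [Int.floor_le y, Int.lt_floor_add_one y]
  · refine ⟨⌈y⌉, ?_, ?_⟩
    · rw [abs_of_nonpos h, abs_of_nonpos (by exact_mod_cast Int.ceil_le.2 (by simpa using h))]
      linarith [Int.le_ceil y]
    · rw [abs_le]
      constructor <;> linarith [Int.le_ceil y, Int.ceil_lt_add_one y]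

lemma deterministic {n k : ℕ} (A : Fin n → Fin k → ℝ)
    (hnet : ∀ w ∈ net k, n / 10 * √(∑ j, ((w j : ℝ)) ^ 2) ≤ l1 (av A fun j => (w j : ℝ)))
    (hsgn : ∀ b, l1 (av A (sgn b)) ≤ 3 * n * √k) (x : Fin k → ℝ) (hx : x ≠ 0) :
    1 / 41 * ((n : ℝ) / √k) * l1 x ≤ l1 (av A x) := by
  obtain ⟨j₀, hj₀⟩ := Function.ne_iff.1 hx
  have hk : (0 : ℝ) < k := by exact_mod_cast j₀.pos
  have hL : 0 < l1 x :=
    Finset.sum_pos' (fun _ _ => abs_nonneg _) ⟨j₀, Finset.mem_univ _, abs_pos.2 hj₀⟩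
  set c := 41 * (k : ℝ) / l1 x with hc
  have hc0 : 0 < c := by positivity
  have hy : l1 (c • x) = 41 * k := by
    rw [l1_smul, abs_of_pos hc0, hc]; field_simp
  choose w hw1 hw2 using fun j => exists_trunc ((c • x) j)
  set W : Fin k → ℝ := fun j => (w j : ℝ) with hW
  have hWle : l1 W ≤ 41 * k := hy ▸ Finset.sum_le_sum fun j _ => hw1 j
  have hwsum : ∑ j, (w j).natAbs ≤ 41 * k := by
    have : ((∑ j, (w j).natAbs : ℕ) : ℝ) ≤ ((41 * k : ℕ) : ℝ) := by
      push_cast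
      simpa [l1, hW, Nat.cast_natAbs] using hWle
    exact_mod_cast this
  have hmem : w ∈ net k := by
    refine Finset.mem_filter.2 ⟨Fintype.mem_piFinset.2 fun j => ?_, hwsum⟩
    have := Finset.single_le_sum (f := fun j => (w j).natAbs) (fun _ _ => Nat.zero_le _)
      (Finset.mem_univ j)
    rw [Finset.mem_Icc]
    omega
  have hdiff : l1 (c • x - W) ≤ k := by
    calc l1 (c • x - W) ≤ ∑ _j : Fin k, (1 : ℝ) := Finset.sum_le_sum fun j _ => hw2 j
      _ = k := by simp
  have hWge : 40 * (k : ℝ) ≤ l1 W := by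
    have := l1_add_le (c • x - W) W
    rw [sub_add_cancel, hy] at this
    linarith
  have hs0 : 0 < √(k : ℝ) := Real.sqrt_pos.2 hk
  have hss : √(k : ℝ) * √k = k := Real.mul_self_sqrt hk.le
  -- Cauchy–Schwarz turns the ℓ¹ bound on `W` into a Euclidean one
  have hcs : 40 * √(k : ℝ) ≤ √(∑ j, W j ^ 2) := by
    apply Real.le_sqrt_of_sq_le
    have h := sq_sum_le_card_mul_sum_sq (s := Finset.univ) (f := fun j => |W j|)
    simp only [sq_abs, Finset.card_univ, Fintype.card_fin] at h
    have h' : (40 * (k : ℝ)) ^ 2 ≤ k * ∑ j, W j ^ 2 :=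
      (pow_le_pow_left₀ (by positivity) hWge 2).trans h
    rw [mul_pow, Real.sq_sqrt hk.le]
    refine le_of_mul_le_mul_left ?_ hk
    linarith
  have h1 : 4 * n * √(k : ℝ) ≤ l1 (av A W) := by
    refine le_trans ?_ (hnet w hmem)
    calc 4 * n * √(k : ℝ) = n / 10 * (40 * √(k : ℝ)) := by ring
      _ ≤ _ := by gcongr
  have h2 : l1 (av A (W - c • x)) ≤ 3 * n * √k := by
    refine l1_cube_le A _ (fun j => ?_) _ hsgn
    rw [Pi.sub_apply, abs_sub_comm]
    exact hw2 j
  have h3 : n * √(k : ℝ) ≤ c * l1 (av A x) := by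
    have := l1_add_le (av A (W - c • x)) (av A (c • x))
    rw [← av_add, sub_add_cancel, av_smul A c, l1_smul, abs_of_pos hc0] at this
    linarith
  rw [hc, div_mul_eq_mul_div, le_div_iff₀ hL] at h3
  have h4 : 1 / 41 * ((n : ℝ) / √k) * l1 x = n * √k * l1 x / (41 * k) := by
    rw [div_eq_mul_inv (n : ℝ), show (√(k : ℝ))⁻¹ = √k / k by rw [Real.sqrt_div_self', one_div]]
    field_simp
  rw [h4, div_le_iff₀ (by positivity)]
  linarith

/-- There exist universal constants `c̃, γ₁, γ₂ > 0` such that: if `A` is an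
`n × k` random matrix with i.i.d. N(0,1) entries and `k ≤ n/16`, then with probability at
least `1 − 2e^{−n/32} − γ₁ e^{−γ₂ n}`, every nonzero `x ∈ ℝᵏ` satisfies
`‖Ax‖₁ ≥ c̃ (n/√k) ‖x‖₁`. -/
theorem l1_operator_lower_bound_gaussian :
    ∃ ct γ₁ γ₂ : ℝ, 0 < ct ∧ 0 < γ₁ ∧ 0 < γ₂ ∧
    ∀ n k : ℕ, (k : ℝ) ≤ (n : ℝ) / 16 →
      stdGaussianMatrix n k
        {A : Fin n → Fin k → ℝ | ∀ x : Fin k → ℝ, x ≠ 0 →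
          ct * ((n : ℝ) / Real.sqrt k) * l1 x ≤ l1 (fun i => ∑ j, A i j * x j)} ≥
      ENNReal.ofReal (1 - 2 * Real.exp (-(n : ℝ) / 32) - γ₁ * Real.exp (-γ₂ * n)) := by
  refine ⟨1 / 41, 2, Real.log (5 / 3), by norm_num, by norm_num, Real.log_pos (by norm_num),
    fun n k hkn => ?_⟩
  have hkn' : 16 * k ≤ n := by
    have : ((16 * k : ℕ) : ℝ) ≤ n := by push_cast; linarith
    exact_mod_cast this
  set μ := stdGaussianMatrix n k
  set S := {A : Fin n → Fin k → ℝ | ∀ x : Fin k → ℝ, x ≠ 0 →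
          1 / 41 * ((n : ℝ) / Real.sqrt k) * l1 x ≤ l1 (fun i => ∑ j, A i j * x j)} with hS
  set B₁ : Set (Fin n → Fin k → ℝ) := ⋃ w ∈ net k,
    {A | l1 (av A fun j => (w j : ℝ)) < n / 10 * √(∑ j, ((w j : ℝ)) ^ 2)} with hB₁
  set B₂ : Set (Fin n → Fin k → ℝ) := ⋃ b ∈ (Finset.univ : Finset (Fin k → Bool)),
    {A | 3 * n * √k < l1 (av A (sgn b))} with hB₂
  have hcover : Set.univ ⊆ S ∪ (B₁ ∪ B₂) := by
    intro A _
    by_contra h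
    simp only [Set.mem_union, not_or, hB₁, hB₂, Set.mem_iUnion, Set.mem_ofPred_eq, not_exists,
      not_lt] at h
    exact h.1 fun x hx => deterministic A (fun w hw => h.2.1 w hw)
      (fun b => h.2.2 b (Finset.mem_univ _)) x hx
  have hP₁ : μ.real B₁ ≤ (3 / 5) ^ n := by
    calc μ.real B₁ ≤ ∑ w ∈ net k, _ := measureReal_biUnion_finset_le _ _
      _ ≤ ∑ _w ∈ net k, (3 / 10 : ℝ) ^ n := Finset.sum_le_sum fun w _ => small_prob _
      _ = (net k).card * (3 / 10 : ℝ) ^ n := by rw [Finset.sum_const, nsmul_eq_mul]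
      _ ≤ 2 ^ n * (3 / 10 : ℝ) ^ n := by
          gcongr
          calc ((net k).card : ℝ) ≤ 256 ^ k := card_net_le k
            _ = 2 ^ (8 * k) := by rw [pow_mul]; norm_num
            _ ≤ 2 ^ n := pow_le_pow_right₀ (by norm_num) (by omega)
      _ = (3 / 5) ^ n := by rw [← mul_pow]; norm_num
  have hP₂ : μ.real B₂ ≤ (3 / 5) ^ n := by
    calc μ.real B₂ ≤ ∑ b, _ := measureReal_biUnion_finset_le _ _
      _ ≤ ∑ _b : Fin k → Bool, (3 / 10 : ℝ) ^ n := Finset.sum_le_sum fun b _ =>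
          large_prob _ fun j => by unfold sgn; split_ifs <;> norm_num
      _ = 2 ^ k * (3 / 10 : ℝ) ^ n := by simp
      _ ≤ 2 ^ n * (3 / 10 : ℝ) ^ n := by
          gcongr
          · norm_num
          · omega
      _ = (3 / 5) ^ n := by rw [← mul_pow]; norm_num
  have hexp : rexp (-Real.log (5 / 3) * n) = (3 / 5) ^ n := by
    rw [mul_comm, Real.exp_nat_mul, Real.exp_neg, Real.exp_log (by norm_num)]
    norm_num
  have htot : 1 ≤ μ.real S + (μ.real B₁ + μ.real B₂) := by
    calc (1 : ℝ) = μ.real Set.univ := by simp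
      _ ≤ μ.real (S ∪ (B₁ ∪ B₂)) := measureReal_mono hcover (measure_ne_top _ _)
      _ ≤ μ.real S + μ.real (B₁ ∪ B₂) := measureReal_union_le _ _
      _ ≤ _ := by gcongr; exact measureReal_union_le _ _
  rw [ge_iff_le, hexp]
  refine ENNReal.ofReal_le_of_le_toReal ?_
  change _ ≤ μ.real S
  linarith [Real.exp_pos (-(n : ℝ) / 32)]
end

section
/- There exist universal constants c > 0, C > 0, γ₁ > 0, γ₂ > 0 such that the following holds. Let Ṽ be an n × k random matrix with i.i.d. N(0,1) entries, where k ≤ n/16, and fix an index i* ∈ {1, …, n}. Then with probability at least 1 − γ₁e^{−γ₂·n} − γ₁e^{−γ₂·k}, the set {x̃ ∈ ℝᵏ : (Ṽx̃)(i*) = 1} is nonempty and the infimum M of ‖Ṽx̃‖₁ over this set satisfies c·n/√k ≤ M ≤ C·n/√k. -/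
/-!
Write `v` for the row of index `i*` and `p x = ‖Ṽ x‖₁`, a seminorm on Euclidean `ℝᵏ`. On a good
event,

* `(n / 128) ‖x‖ ≤ p x ≤ 8 n ‖x‖` for every `x`, and
* `√k / 64 ≤ ‖v‖ ≤ 3 √k`.

This suffices (`sInf_bounds`). The point `x = v / ‖v‖²` is feasible with norm `1 / ‖v‖`, so
`M ≤ 8 n / ‖v‖ ≤ 512 n / √k`. Conversely, Cauchy–Schwarz forces `‖x‖ ≥ 1 / ‖v‖` for every feasible
`x`, so `M ≥ (n / 128) / (3 √k)`.

The two-sided bound on `p` comes from a net argument. For a fixed unit vector `u` the coordinates of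
`Ṽ u` are i.i.d. standard Gaussians, and Chernoff bounds show that `p u ≥ 4 n` and `p u ≤ n / 64`
have probability at most `qⁿ` with `2 q ≤ e⁻¹` (`measure_large_le`, `measure_small_le`). A volume
argument gives a `1/1024`-net of the unit sphere with at most `2049ᵏ` points
(`exists_net_unitSphere`), and `2049ᵏ ≤ 2^(16 k) ≤ 2ⁿ` because `k ≤ n / 16`. A union bound
therefore costs a factor `2ⁿ` and leaves failure probability `e⁻ⁿ` for each of the two events. The
estimates pass from the net to the whole sphere by `seminorm_le_of_net` and `le_seminorm_of_net`.

The bounds on `‖v‖` fail with probability at most `2 e⁻ᵏ`, by Chernoff bounds for `∑ⱼ v(j)²` and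
for `∑ⱼ |v(j)|`; the second one controls `‖v‖` from below because `(∑ⱼ |v(j)|)² ≤ k ‖v‖²`.
-/

open MeasureTheory ProbabilityTheory Real

open scoped ENNReal

/-! ### Exponential moments of the standard Gaussian -/

lemma lintegral_gaussianReal_ofReal {f : ℝ → ℝ} (hf : Measurable f) :
    ∫⁻ x, ENNReal.ofReal (f x) ∂(gaussianReal 0 1) =
      ∫⁻ x, ENNReal.ofReal ((√(2 * π))⁻¹ * exp (-x ^ 2 / 2) * f x) := by
  rw [gaussianReal_of_var_ne_zero _ one_ne_zero,
    lintegral_withDensity_eq_lintegral_mul _ (measurable_gaussianPDF 0 1) (by fun_prop)]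
  refine lintegral_congr fun x => ?_
  rw [Pi.mul_apply, gaussianPDF, ← ENNReal.ofReal_mul (gaussianPDFReal_nonneg _ _ _)]
  simp [gaussianPDFReal]

/-- The exact value is `√2`. -/
lemma lintegral_exp_sq_gaussianReal_le :
    ∫⁻ x, ENNReal.ofReal (exp (x ^ 2 / 4)) ∂(gaussianReal 0 1) ≤ ENNReal.ofReal (3 / 2) := by
  rw [lintegral_gaussianReal_ofReal (by fun_prop)]
  have h (x : ℝ) : (√(2 * π))⁻¹ * exp (-x ^ 2 / 2) * exp (x ^ 2 / 4) =
      (√(2 * π))⁻¹ * exp (-(1 / 4) * x ^ 2) := by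
    rw [mul_assoc, ← exp_add]; ring_nf
  simp_rw [h]
  rw [← ofReal_integral_eq_lintegral_ofReal
    ((integrable_exp_neg_mul_sq (by norm_num)).const_mul _)
    (Filter.Eventually.of_forall fun x => by positivity), integral_const_mul, integral_gaussian]
  apply ENNReal.ofReal_le_ofReal
  rw [inv_mul_le_iff₀ (by positivity)]
  apply Real.sqrt_le_iff.2 ⟨by positivity, ?_⟩
  rw [mul_pow, Real.sq_sqrt (by positivity)]
  nlinarith [pi_pos]

/-- Follows from the previous bound through `|x| ≤ x² / 4 + 1`. -/
lemma lintegral_exp_abs_gaussianReal_le :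
    ∫⁻ x, ENNReal.ofReal (exp |x|) ∂(gaussianReal 0 1) ≤ ENNReal.ofReal (3 / 2 * exp 1) := by
  calc ∫⁻ x, ENNReal.ofReal (exp |x|) ∂(gaussianReal 0 1)
      ≤ ∫⁻ x, ENNReal.ofReal (exp (x ^ 2 / 4)) * ENNReal.ofReal (exp 1) ∂(gaussianReal 0 1) := by
        refine lintegral_mono fun x => ?_
        rw [← ENNReal.ofReal_mul (exp_pos _).le, ← exp_add]
        gcongr
        nlinarith [sq_nonneg (|x| - 2), sq_abs x]
    _ ≤ _ := by
        rw [lintegral_mul_const _ (by fun_prop), ENNReal.ofReal_mul (by norm_num)]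
        gcongr
        exact lintegral_exp_sq_gaussianReal_le

/-- The Gaussian density is at most `1`, and `exp (-64 |x|)` has Lebesgue integral `1 / 32`. -/
lemma lintegral_exp_neg_abs_gaussianReal_le :
    ∫⁻ x, ENNReal.ofReal (exp (-64 * |x|)) ∂(gaussianReal 0 1) ≤ ENNReal.ofReal (1 / 32) := by
  rw [lintegral_gaussianReal_ofReal (by fun_prop)]
  have hI : ∫ x : ℝ, exp (-64 * |x|) = 1 / 32 := by
    rw [integral_comp_abs (f := fun x => exp (-64 * x)), integral_exp_mul_Ioi (by norm_num)]
    norm_num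
  -- A function with nonzero Bochner integral is integrable.
  rw [← hI, ofReal_integral_eq_lintegral_ofReal
    (Integrable.of_integral_ne_zero (by rw [hI]; norm_num))
    (Filter.Eventually.of_forall fun x => by positivity)]
  refine lintegral_mono fun x => ENNReal.ofReal_le_ofReal ?_
  have h1 : (√(2 * π))⁻¹ ≤ 1 := by
    apply inv_le_one_of_one_le₀
    rw [Real.one_le_sqrt]
    linarith [pi_gt_three]
  have h2 : exp (-x ^ 2 / 2) ≤ 1 := exp_le_one_iff.2 (by nlinarith [sq_nonneg x])
  exact mul_le_of_le_one_left (exp_pos _).le (mul_le_one₀ h1 (exp_pos _).le h2)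

/-- Chernoff bound for a sum of `n` i.i.d. copies of `f`, where `K` bounds the exponential moment
`E exp f`. -/
lemma chernoff_pi {Ω : Type*} [MeasurableSpace Ω] (μ : Measure Ω) [IsProbabilityMeasure μ]
    (n : ℕ) {f : Ω → ℝ} (hf : Measurable f) {K : ℝ} (hK : 0 ≤ K) (a : ℝ)
    (h : ∫⁻ ω, ENNReal.ofReal (exp (f ω)) ∂μ ≤ ENNReal.ofReal K) :
    (Measure.pi fun _ : Fin n => μ) {V | a * n ≤ ∑ i, f (V i)} ≤
      ENNReal.ofReal ((K * exp (-a)) ^ n) := by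
  have hprod : ∫⁻ V, ∏ i, ENNReal.ofReal (exp (f (V i))) ∂(Measure.pi fun _ : Fin n => μ) ≤
      ENNReal.ofReal (K ^ n) := by
    have hind : iIndepFun (fun (i : Fin n) (V : Fin n → Ω) => ENNReal.ofReal (exp (f (V i))))
        (Measure.pi fun _ : Fin n => μ) :=
      iIndepFun_pi (X := fun _ ω => ENNReal.ofReal (exp (f ω))) (μ := fun _ : Fin n => μ)
        (fun i => by fun_prop)
    rw [lintegral_prod_eq_prod_lintegral_of_indepFun Finset.univ _ hind (fun i => by fun_prop)]
    calc _ = ∏ i : Fin n, ∫⁻ ω, ENNReal.ofReal (exp (f ω)) ∂μ := by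
          refine Finset.prod_congr rfl fun i _ => ?_
          exact (measurePreserving_eval (fun _ : Fin n => μ) i).lintegral_comp
            (f := fun ω => ENNReal.ofReal (exp (f ω))) (by fun_prop)
      _ ≤ ∏ i : Fin n, ENNReal.ofReal K := Finset.prod_le_prod' fun i _ => h
      _ = _ := by simp [ENNReal.ofReal_pow hK]
  have hmar := mul_meas_ge_le_lintegral (μ := Measure.pi fun _ : Fin n => μ)
    (f := fun V => ∏ i, ENNReal.ofReal (exp (f (V i))))
    (Finset.measurable_prod _ fun i _ => by fun_prop) (ENNReal.ofReal (exp (a * n)))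
  have hset : {V : Fin n → Ω | a * n ≤ ∑ i, f (V i)} =
      {V | ENNReal.ofReal (exp (a * n)) ≤ ∏ i, ENNReal.ofReal (exp (f (V i)))} := by
    ext V
    rw [Set.mem_ofPred_eq, Set.mem_ofPred_eq, ← ENNReal.ofReal_prod_of_nonneg
      (fun i _ => (exp_pos _).le), ← exp_sum, ENNReal.ofReal_le_ofReal_iff (exp_pos _).le,
      exp_le_exp]
  rw [hset]
  have hpos : ENNReal.ofReal (exp (a * n)) ≠ 0 := by simp [exp_pos]
  rw [← ENNReal.mul_le_mul_iff_right hpos ENNReal.ofReal_ne_top]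
  refine hmar.trans (hprod.trans (le_of_eq ?_))
  rw [← ENNReal.ofReal_mul (exp_pos _).le, mul_pow, ← exp_nat_mul]
  congr 1
  rw [mul_left_comm, ← exp_add]
  ring_nf
  simp

/-- By rotation invariance, the inner product of a standard Gaussian vector with a unit vector is a
standard Gaussian. -/
lemma map_rowSum {k : ℕ} (u : EuclideanSpace ℝ (Fin k)) (hu : ‖u‖ = 1) :
    (Measure.pi fun _ : Fin k => gaussianReal 0 1).map (fun g => ∑ j, g j * u j) =
      gaussianReal 0 1 := by
  have h : (fun g : Fin k → ℝ => ∑ j, g j * u j) =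
      (innerSL ℝ u : EuclideanSpace ℝ (Fin k) → ℝ) ∘ (WithLp.toLp 2) := by
    ext g
    simp [PiLp.inner_apply]
  rw [h, ← Measure.map_map (by fun_prop) (by fun_prop), map_pi_eq_stdGaussian,
    IsGaussian.map_eq_gaussianReal, variance_dual_stdGaussian, integral_strongDual_stdGaussian]
  simp [hu]

/-! ### Nets of the Euclidean sphere -/

/-- The balls of radius `1/2048` around the points of `s` are disjoint and lie in the ball of radius
`2049/2048`; compare volumes. -/
lemma card_le_of_separated_unit {k : ℕ} (s : Finset (EuclideanSpace ℝ (Fin k)))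
    (hs : ∀ c ∈ s, ‖c‖ = 1) (h : ∀ c ∈ s, ∀ d ∈ s, c ≠ d → 1 / 1024 ≤ ‖c - d‖) :
    s.card ≤ 2049 ^ k := by
  let μ : Measure (EuclideanSpace ℝ (Fin k)) := volume
  have D : Set.PairwiseDisjoint (s : Set (EuclideanSpace ℝ (Fin k)))
      (fun c => Metric.ball c (1 / 2048)) := by
    rintro c hc d hd hcd
    apply Metric.ball_disjoint_ball
    rw [dist_eq_norm]
    have := h c hc d hd hcd
    linarith
  have hsub : (⋃ c ∈ s, Metric.ball c (1 / 2048)) ⊆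
      Metric.ball (0 : EuclideanSpace ℝ (Fin k)) (2049 / 2048) := by
    refine Set.iUnion₂_subset fun c hc => Metric.ball_subset_ball' ?_
    rw [dist_zero_right, hs c hc]
    norm_num
  have hvol : (s.card : ℝ≥0∞) * ENNReal.ofReal ((1 / 2048) ^ k) * μ (Metric.ball 0 1) ≤
      ENNReal.ofReal ((2049 / 2048) ^ k) * μ (Metric.ball 0 1) := by
    have := measure_mono (μ := μ) hsub
    rw [measure_biUnion_finset D fun c _ => measurableSet_ball] at this
    simp only [μ.addHaar_ball_of_pos _ (by norm_num : (0 : ℝ) < 1 / 2048),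
      μ.addHaar_ball_of_pos _ (by norm_num : (0 : ℝ) < 2049 / 2048), finrank_euclideanSpace,
      Fintype.card_fin, Finset.sum_const, nsmul_eq_mul, ← mul_assoc] at this
    exact this
  have J := (ENNReal.mul_le_mul_iff_left
    (Metric.measure_ball_pos μ _ zero_lt_one).ne' measure_ball_lt_top.ne).1 hvol
  have K := ENNReal.toReal_le_of_le_ofReal (by positivity) J
  rw [ENNReal.toReal_mul, ENNReal.toReal_natCast, ENNReal.toReal_ofReal (by positivity), div_pow,
    div_pow, one_pow, mul_one_div, div_le_div_iff_of_pos_right (by positivity)] at K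
  exact_mod_cast K

/-- A separated subset of the sphere of maximal cardinality is a net. -/
lemma exists_net_unitSphere (k : ℕ) :
    ∃ N : Finset (EuclideanSpace ℝ (Fin k)), N.card ≤ 2049 ^ k ∧ (∀ u ∈ N, ‖u‖ = 1) ∧
      ∀ x : EuclideanSpace ℝ (Fin k), ‖x‖ = 1 → ∃ u ∈ N, ‖x - u‖ ≤ 1 / 1024 := by
  classical
  let P : ℕ → Prop := fun m => ∃ s : Finset (EuclideanSpace ℝ (Fin k)), s.card = m ∧
    (∀ c ∈ s, ‖c‖ = 1) ∧ ∀ c ∈ s, ∀ d ∈ s, c ≠ d → 1 / 1024 ≤ ‖c - d‖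
  have hP0 : P 0 := ⟨∅, by simp⟩
  obtain ⟨s, hcard, hs, hsep⟩ : P (Nat.findGreatest P (2049 ^ k)) :=
    Nat.findGreatest_spec (Nat.zero_le _) hP0
  refine ⟨s, card_le_of_separated_unit s hs hsep, hs, fun x hx => ?_⟩
  by_contra! hfar
  have hxs : x ∉ s := fun hxs => by
    have := hfar x hxs
    rw [sub_self, norm_zero] at this
    norm_num at this
  -- Adjoining `x` would contradict the maximality of `s`.
  have hs' : ∀ c ∈ insert x s, ‖c‖ = 1 := by
    intro c hc
    rcases Finset.mem_insert.1 hc with rfl | hc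
    exacts [hx, hs c hc]
  have hsep' : ∀ c ∈ insert x s, ∀ d ∈ insert x s, c ≠ d → 1 / 1024 ≤ ‖c - d‖ := by
    intro c hc d hd hcd
    rcases Finset.mem_insert.1 hc with rfl | hc' <;> rcases Finset.mem_insert.1 hd with rfl | hd'
    · exact absurd rfl hcd
    · exact (hfar d hd').le
    · rw [norm_sub_rev]; exact (hfar c hc').le
    · exact hsep c hc' d hd' hcd
  have hle := Nat.le_findGreatest (P := P) (card_le_of_separated_unit _ hs' hsep')
    ⟨_, rfl, hs', hsep'⟩
  rw [Finset.card_insert_of_notMem hxs, hcard] at hle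
  omega

/-- If `p` attains its maximum `L` over the sphere at `z`, and `u` is a net point near `z`, then
`L ≤ p (z - u) + p u ≤ L / 1024 + A`. -/
lemma seminorm_le_of_net {k : ℕ} (p : Seminorm ℝ (EuclideanSpace ℝ (Fin k)))
    (hpc : Continuous p)
    {N : Finset (EuclideanSpace ℝ (Fin k))}
    (hN : ∀ x : EuclideanSpace ℝ (Fin k), ‖x‖ = 1 → ∃ u ∈ N, ‖x - u‖ ≤ 1 / 1024)
    {A : ℝ} (hA : ∀ u ∈ N, p u ≤ A) (x : EuclideanSpace ℝ (Fin k)) : p x ≤ 2 * A * ‖x‖ := by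
  -- By homogeneity, a bound on the sphere is a bound on the whole space.
  have hhom (L : ℝ) (hL : ∀ y : EuclideanSpace ℝ (Fin k), ‖y‖ = 1 → p y ≤ L)
      (y : EuclideanSpace ℝ (Fin k)) : p y ≤ L * ‖y‖ := by
    rcases eq_or_ne y 0 with rfl | hy
    · simp
    have h := hL (‖y‖⁻¹ • y) (norm_smul_inv_norm hy)
    rw [map_smul_eq_mul, norm_inv, norm_norm, inv_mul_le_iff₀ (norm_pos_iff.2 hy)] at h
    linarith
  refine hhom _ (fun y hy => ?_) x
  obtain ⟨z, hz, hmax⟩ := (isCompact_sphere (0 : EuclideanSpace ℝ (Fin k)) 1).exists_isMaxOn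
    ⟨y, by simpa using hy⟩ hpc.continuousOn
  have hmax' : ∀ w : EuclideanSpace ℝ (Fin k), ‖w‖ = 1 → p w ≤ p z :=
    fun w hw => hmax (by simpa using hw)
  obtain ⟨u, hu, hzu⟩ := hN z (by simpa using hz)
  have h1 : p z ≤ p (z - u) + p u := by simpa using map_add_le_add p (z - u) u
  have h2 := hhom _ hmax' (z - u)
  have h3 := hA u hu
  have h4 := hmax' y hy
  have h5 : p z * ‖z - u‖ ≤ p z * (1 / 1024) :=
    mul_le_mul_of_nonneg_left hzu (apply_nonneg p z)
  have := apply_nonneg p z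
  linarith

/-- A lower bound `B` on the net passes to the sphere up to an error `L / 1024`, where `L` is a
Lipschitz constant of `p`. -/
lemma le_seminorm_of_net {k : ℕ} (p : Seminorm ℝ (EuclideanSpace ℝ (Fin k)))
    {N : Finset (EuclideanSpace ℝ (Fin k))}
    (hN : ∀ x : EuclideanSpace ℝ (Fin k), ‖x‖ = 1 → ∃ u ∈ N, ‖x - u‖ ≤ 1 / 1024)
    {B L : ℝ} (hL : 0 ≤ L) (hp : ∀ x, p x ≤ L * ‖x‖) (hB : ∀ u ∈ N, B ≤ p u)
    (x : EuclideanSpace ℝ (Fin k)) : (B - L / 1024) * ‖x‖ ≤ p x := by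
  rcases eq_or_ne x 0 with rfl | hx
  · simp
  have hy : ‖‖x‖⁻¹ • x‖ = 1 := norm_smul_inv_norm hx
  obtain ⟨u, hu, hxu⟩ := hN _ hy
  have h1 : p u ≤ p (u - ‖x‖⁻¹ • x) + p (‖x‖⁻¹ • x) := by
    simpa using map_add_le_add p (u - ‖x‖⁻¹ • x) (‖x‖⁻¹ • x)
  have h2 := hp (u - ‖x‖⁻¹ • x)
  rw [norm_sub_rev] at h2
  have h3 := mul_le_mul_of_nonneg_left hxu hL
  have h4 := hB u hu
  rw [map_smul_eq_mul, norm_inv, norm_norm] at h1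
  have h5 : B - L / 1024 ≤ ‖x‖⁻¹ * p x := by linarith
  rwa [le_inv_mul_iff₀ (norm_pos_iff.2 hx), mul_comm] at h5

/-! ### Bounds on the infimum for a well-behaved matrix -/

/-- The seminorm `x ↦ ‖V x‖₁` on Euclidean `ℝᵏ`. -/
noncomputable def imageL1 {n k : ℕ} (V : Fin n → Fin k → ℝ) :
    Seminorm ℝ (EuclideanSpace ℝ (Fin k)) :=
  Seminorm.of (fun x => l1 fun i => ∑ j, V i j * x j)
    (fun x y => by
      simp only [l1, PiLp.add_apply, mul_add, Finset.sum_add_distrib]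
      rw [← Finset.sum_add_distrib]
      exact Finset.sum_le_sum fun i _ => abs_add_le _ _)
    (fun a x => by
      simp only [l1, PiLp.smul_apply, smul_eq_mul, mul_left_comm _ a, ← Finset.mul_sum, abs_mul,
        Real.norm_eq_abs])

lemma imageL1_apply {n k : ℕ} (V : Fin n → Fin k → ℝ) (x : EuclideanSpace ℝ (Fin k)) :
    imageL1 V x = ∑ i, |∑ j, V i j * x j| := rfl

lemma continuous_imageL1 {n k : ℕ} (V : Fin n → Fin k → ℝ) : Continuous (imageL1 V) := by
  change Continuous fun x : EuclideanSpace ℝ (Fin k) => ∑ i, |∑ j, V i j * x j|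
  fun_prop

/-- The deterministic part: a two-sided comparison of `‖V x‖₁` with `n ‖x‖`, together with a row of
Euclidean norm of order `√k`, gives both bounds on the infimum. -/
lemma sInf_bounds {n k : ℕ} (hk : 0 < k) (istar : Fin n) (V : Fin n → Fin k → ℝ)
    (hup : ∀ x, imageL1 V x ≤ 8 * n * ‖x‖) (hlo : ∀ x, (n : ℝ) / 128 * ‖x‖ ≤ imageL1 V x)
    (hsq : ∑ j, V istar j ^ 2 ≤ 9 * k) (habs : (k : ℝ) / 64 ≤ ∑ j, |V istar j|) :
    (∃ xt : Fin k → ℝ, (∑ j, V istar j * xt j) = 1) ∧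
      1 / 384 * ((n : ℝ) / √k) ≤
        sInf {r : ℝ | ∃ xt : Fin k → ℝ, (∑ j, V istar j * xt j) = 1 ∧
          l1 (fun i => ∑ j, V i j * xt j) = r} ∧
      sInf {r : ℝ | ∃ xt : Fin k → ℝ, (∑ j, V istar j * xt j) = 1 ∧
          l1 (fun i => ∑ j, V i j * xt j) = r} ≤ 512 * ((n : ℝ) / √k) := by
  have hk' : (0 : ℝ) < k := by exact_mod_cast hk
  have hsk : 0 < √(k : ℝ) := Real.sqrt_pos.2 hk'
  have hsk2 : √(k : ℝ) ^ 2 = k := Real.sq_sqrt hk'.le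
  set w : EuclideanSpace ℝ (Fin k) := WithLp.toLp 2 (V istar) with hw
  have hwsq : ‖w‖ ^ 2 = ∑ j, V istar j ^ 2 := by simp [EuclideanSpace.real_norm_sq_eq, hw]
  have hwle : ‖w‖ ≤ 3 * √k := by
    apply le_of_sq_le_sq _ (by positivity)
    rw [mul_pow, hsk2, hwsq]
    linarith
  have hwge : √k / 64 ≤ ‖w‖ := by
    apply le_of_sq_le_sq _ (norm_nonneg w)
    rw [div_pow, hsk2, hwsq]
    have hcs : (∑ j, |V istar j|) ^ 2 ≤ k * ∑ j, V istar j ^ 2 := by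
      simpa [sq_abs] using
        sq_sum_le_card_mul_sum_sq (s := Finset.univ) (f := fun j => |V istar j|)
    have h2 : ((k : ℝ) / 64) ^ 2 ≤ k * ∑ j, V istar j ^ 2 :=
      (pow_le_pow_left₀ (by positivity) habs 2).trans hcs
    have h3 : (k : ℝ) * (k / 64 ^ 2) ≤ k * ∑ j, V istar j ^ 2 := by
      calc _ = ((k : ℝ) / 64) ^ 2 := by ring
        _ ≤ _ := h2
    exact le_of_mul_le_mul_left h3 hk'
  have hwpos : 0 < ‖w‖ := lt_of_lt_of_le (by positivity) hwge
  -- The feasible point of least Euclidean norm, used as the test point for the upper bound.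
  set x : EuclideanSpace ℝ (Fin k) := (‖w‖ ^ 2)⁻¹ • w with hx
  have hxnorm : ‖x‖ = ‖w‖⁻¹ := by
    rw [hx, norm_smul, norm_inv, norm_pow, norm_norm]
    field_simp
  have hxfeas : ∑ j, V istar j * x j = 1 := by
    have : ∑ j, V istar j * x j = (‖w‖ ^ 2)⁻¹ * ∑ j, V istar j ^ 2 := by
      rw [Finset.mul_sum]
      refine Finset.sum_congr rfl fun j _ => ?_
      simp only [hx, hw, PiLp.smul_apply, smul_eq_mul]
      ring
    rw [this, ← hwsq, inv_mul_cancel₀ (by positivity)]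
  refine ⟨⟨x, hxfeas⟩, ?_, ?_⟩
  · refine le_csInf ⟨_, x, hxfeas, rfl⟩ ?_
    rintro r ⟨y, hy, rfl⟩
    -- Feasibility and Cauchy–Schwarz force `1 ≤ ‖w‖ * ‖y‖`.
    have hcs : 1 ≤ ‖w‖ * ‖(WithLp.toLp 2 y : EuclideanSpace ℝ (Fin k))‖ := by
      have h1 := real_inner_le_norm w (WithLp.toLp 2 y : EuclideanSpace ℝ (Fin k))
      rwa [hw, EuclideanSpace.inner_toLp_toLp, dotProduct_comm,
        show star (V istar) ⬝ᵥ y = 1 from hy] at h1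
    have h2 : 1 / (3 * √k) ≤ ‖(WithLp.toLp 2 y : EuclideanSpace ℝ (Fin k))‖ := by
      rw [div_le_iff₀ (by positivity)]
      nlinarith [norm_nonneg (WithLp.toLp 2 y : EuclideanSpace ℝ (Fin k))]
    calc 1 / 384 * ((n : ℝ) / √k) = n / 128 * (1 / (3 * √k)) := by field_simp; ring
      _ ≤ n / 128 * ‖(WithLp.toLp 2 y : EuclideanSpace ℝ (Fin k))‖ := by gcongr
      _ ≤ _ := hlo (WithLp.toLp 2 y)
  · refine le_trans (b := imageL1 V x) (csInf_le ?_ ⟨x, hxfeas, rfl⟩) ((hup x).trans ?_)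
    · refine ⟨0, ?_⟩
      rintro r ⟨y, -, rfl⟩
      exact Finset.sum_nonneg fun i _ => abs_nonneg _
    · rw [hxnorm]
      calc 8 * (n : ℝ) * ‖w‖⁻¹ ≤ 8 * n * (√k / 64)⁻¹ := by gcongr
        _ = 512 * (n / √k) := by field_simp; ring

/-! ### Tail estimates and the union bound -/

lemma lintegral_rowSum {k : ℕ} {u : EuclideanSpace ℝ (Fin k)} (hu : ‖u‖ = 1) {f : ℝ → ℝ}
    (hf : Measurable f) :
    ∫⁻ g, ENNReal.ofReal (exp (f (∑ j, g j * u j))) ∂(Measure.pi fun _ : Fin k => gaussianReal 0 1)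
      = ∫⁻ x, ENNReal.ofReal (exp (f x)) ∂(gaussianReal 0 1) := by
  conv_rhs => rw [← map_rowSum u hu]
  rw [lintegral_map (by fun_prop) (by fun_prop)]

/-- The failure rate `exp 1 / 32` of the small-ball estimates beats the factor `2` of the union
bound. -/
lemma two_mul_exp_le : 2 * (1 / 32 * exp (- -1)) ≤ exp (-1) := by
  have h : exp (- -1) = exp (-1) * exp 1 ^ 2 := by
    rw [← exp_nat_mul, ← exp_add]; norm_num
  have h1 := exp_one_lt_d9
  have h2 : exp 1 ^ 2 ≤ 16 := by nlinarith [exp_pos 1]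
  rw [h]
  nlinarith [exp_pos (-1)]

lemma measure_large_le {n k : ℕ} {u : EuclideanSpace ℝ (Fin k)} (hu : ‖u‖ = 1) :
    stdGaussianMatrix n k {V | 4 * n ≤ imageL1 V u} ≤
      ENNReal.ofReal ((3 / 2 * exp 1 * exp (-4)) ^ n) := by
  refine chernoff_pi (Measure.pi fun _ : Fin k => gaussianReal 0 1) n
    (f := fun g => |∑ j, g j * u j|) (by fun_prop) (by positivity) 4 ?_
  rw [lintegral_rowSum hu (f := fun x => |x|) (by fun_prop)]
  exact lintegral_exp_abs_gaussianReal_le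

lemma measure_small_le {n k : ℕ} {u : EuclideanSpace ℝ (Fin k)} (hu : ‖u‖ = 1) :
    stdGaussianMatrix n k {V | imageL1 V u ≤ n / 64} ≤
      ENNReal.ofReal ((1 / 32 * exp (- -1)) ^ n) := by
  refine (measure_mono fun V hV => ?_).trans
    (chernoff_pi (Measure.pi fun _ : Fin k => gaussianReal 0 1) n
      (f := fun g => -64 * |∑ j, g j * u j|) (by fun_prop) (by norm_num) (-1) ?_)
  · rw [Set.mem_ofPred_eq, imageL1_apply] at hV
    rw [Set.mem_ofPred_eq, ← Finset.mul_sum]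
    linarith
  · rw [lintegral_rowSum hu (f := fun x => -64 * |x|) (by fun_prop)]
    exact lintegral_exp_neg_abs_gaussianReal_le

/-- A row of the matrix is a standard Gaussian vector; `S` need not be measurable. -/
lemma measure_row_le {n k : ℕ} (i : Fin n) (S : Set (Fin k → ℝ)) :
    stdGaussianMatrix n k {V | V i ∈ S} ≤ (Measure.pi fun _ : Fin k => gaussianReal 0 1) S := by
  have h := (measurePreserving_eval
    (fun _ : Fin n => Measure.pi fun _ : Fin k => gaussianReal 0 1) i)
  exact (Measure.le_map_apply h.aemeasurable S).trans_eq (by rw [h.map_eq])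

lemma measure_row_large_le {n k : ℕ} (i : Fin n) :
    stdGaussianMatrix n k {V | 9 * k ≤ ∑ j, V i j ^ 2} ≤ ENNReal.ofReal (exp (-k)) := by
  refine (measure_row_le i {g | 9 * k ≤ ∑ j, g j ^ 2}).trans
    ((measure_mono fun g hg => ?_).trans ((chernoff_pi (gaussianReal 0 1) k
      (f := fun x => x ^ 2 / 4) (by fun_prop) (by norm_num) (9 / 4)
      lintegral_exp_sq_gaussianReal_le).trans (ENNReal.ofReal_le_ofReal ?_)))
  · rw [Set.mem_ofPred_eq] at hg ⊢
    rw [← Finset.sum_div]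
    linarith
  · have h : exp (-(k : ℝ)) = exp (-1) ^ k := by rw [← exp_nat_mul]; simp
    rw [h]
    refine pow_le_pow_left₀ (by positivity) ?_ k
    have h1 : exp (-1) = exp (-(9 / 4)) * exp (5 / 4) := by rw [← exp_add]; norm_num
    rw [h1]
    nlinarith [exp_pos (-(9 / 4) : ℝ), add_one_le_exp (5 / 4 : ℝ)]

lemma measure_row_small_le {n k : ℕ} (i : Fin n) :
    stdGaussianMatrix n k {V | ∑ j, |V i j| ≤ k / 64} ≤ ENNReal.ofReal (exp (-k)) := by
  refine (measure_row_le i {g | ∑ j, |g j| ≤ k / 64}).trans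
    ((measure_mono fun g hg => ?_).trans ((chernoff_pi (gaussianReal 0 1) k
      (f := fun x => -64 * |x|) (by fun_prop) (by norm_num) (-1)
      lintegral_exp_neg_abs_gaussianReal_le).trans (ENNReal.ofReal_le_ofReal ?_)))
  · rw [Set.mem_ofPred_eq] at hg ⊢
    rw [← Finset.mul_sum]
    linarith
  · have h : exp (-(k : ℝ)) = exp (-1) ^ k := by rw [← exp_nat_mul]; simp
    rw [h]
    refine pow_le_pow_left₀ (by positivity) ?_ k
    exact (le_mul_of_one_le_left (by positivity) one_le_two).trans two_mul_exp_le

lemma measure_biUnion_net_le {Ω ι : Type*} [MeasurableSpace Ω] {μ : Measure Ω} {n : ℕ}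
    {N : Finset ι} (hN : N.card ≤ 2 ^ n) {S : ι → Set Ω} {q : ℝ} (hq : 0 ≤ q)
    (hq2 : 2 * q ≤ exp (-1)) (hS : ∀ u ∈ N, μ (S u) ≤ ENNReal.ofReal (q ^ n)) :
    μ (⋃ u ∈ N, S u) ≤ ENNReal.ofReal (exp (-n)) := by
  refine (measure_biUnion_finset_le N S).trans ((Finset.sum_le_sum hS).trans ?_)
  rw [Finset.sum_const, nsmul_eq_mul, ← ENNReal.ofReal_natCast,
    ← ENNReal.ofReal_mul (Nat.cast_nonneg _)]
  apply ENNReal.ofReal_le_ofReal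
  calc (N.card : ℝ) * q ^ n ≤ 2 ^ n * q ^ n := by gcongr; exact_mod_cast hN
    _ = (2 * q) ^ n := (mul_pow _ _ _).symm
    _ ≤ exp (-1) ^ n := pow_le_pow_left₀ (by positivity) hq2 n
    _ = exp (-n) := by rw [← exp_nat_mul]; simp

/-- There exist universal constants `c, C, γ₁, γ₂ > 0` such that: if `Ṽ` is
an `n × k` random matrix with i.i.d. N(0,1) entries, `k ≤ n/16`, and `i*` is a fixed index,
then with probability at least `1 − γ₁ e^{−γ₂ n} − γ₁ e^{−γ₂ k}`, the feasible set
`{x̃ ∈ ℝᵏ : (Ṽ x̃)(i*) = 1}` is nonempty and the infimum `M` of `‖Ṽ x̃‖₁` over this set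
satisfies `c n/√k ≤ M ≤ C n/√k`. -/
theorem min_l1_random_subspace_scaling :
    ∃ c C γ₁ γ₂ : ℝ, 0 < c ∧ 0 < C ∧ 0 < γ₁ ∧ 0 < γ₂ ∧
    ∀ n k : ℕ, 0 < k → (k : ℝ) ≤ (n : ℝ) / 16 → ∀ istar : Fin n,
      stdGaussianMatrix n k
        {V : Fin n → Fin k → ℝ |
          (∃ xt : Fin k → ℝ, (∑ j, V istar j * xt j) = 1) ∧
          c * ((n : ℝ) / Real.sqrt k) ≤
            sInf {r : ℝ | ∃ xt : Fin k → ℝ, (∑ j, V istar j * xt j) = 1 ∧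
              l1 (fun i => ∑ j, V i j * xt j) = r} ∧
          sInf {r : ℝ | ∃ xt : Fin k → ℝ, (∑ j, V istar j * xt j) = 1 ∧
              l1 (fun i => ∑ j, V i j * xt j) = r} ≤ C * ((n : ℝ) / Real.sqrt k)} ≥
      ENNReal.ofReal (1 - γ₁ * Real.exp (-γ₂ * n) - γ₁ * Real.exp (-γ₂ * k)) := by
  refine ⟨1 / 384, 512, 2, 1, by norm_num, by norm_num, by norm_num, by norm_num, ?_⟩
  intro n k hk hkn istar
  have hprob : IsProbabilityMeasure (stdGaussianMatrix n k) := by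
    unfold stdGaussianMatrix; infer_instance
  obtain ⟨N, hcard, hunit, hnet⟩ := exists_net_unitSphere k
  have hcard' : N.card ≤ 2 ^ n := by
    have hkn' : 16 * k ≤ n := by
      have : (16 : ℝ) * k ≤ n := by linarith
      exact_mod_cast this
    calc N.card ≤ 2049 ^ k := hcard
      _ ≤ (2 ^ 16) ^ k := Nat.pow_le_pow_left (by norm_num) k
      _ = 2 ^ (16 * k) := (pow_mul _ _ _).symm
      _ ≤ 2 ^ n := Nat.pow_le_pow_right (by norm_num) hkn'
  have hB1 := measure_biUnion_net_le (μ := stdGaussianMatrix n k) hcard' (by positivity)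
    (by
      -- The claim `3 e⁻³ ≤ e⁻¹` reduces to `3 ≤ e²`.
      have h : exp (-1) = exp 1 * exp (-4) * exp 2 := by
        rw [← exp_add, ← exp_add]; norm_num
      rw [h]
      nlinarith [mul_pos (exp_pos 1) (exp_pos (-4)), add_one_le_exp (2 : ℝ)])
    (fun u hu => measure_large_le (hunit u hu))
  have hB2 := measure_biUnion_net_le (μ := stdGaussianMatrix n k) hcard' (by positivity)
    two_mul_exp_le (fun u hu => measure_small_le (hunit u hu))
  have hB3 := measure_row_large_le (k := k) istar
  have hB4 := measure_row_small_le (k := k) istar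
  set B1 : Set (Fin n → Fin k → ℝ) := ⋃ u ∈ N, {V | 4 * n ≤ imageL1 V u}
  set B2 : Set (Fin n → Fin k → ℝ) := ⋃ u ∈ N, {V | imageL1 V u ≤ n / 64}
  set B3 : Set (Fin n → Fin k → ℝ) := {V | 9 * k ≤ ∑ j, V istar j ^ 2}
  set B4 : Set (Fin n → Fin k → ℝ) := {V | ∑ j, |V istar j| ≤ k / 64}
  have hbad : stdGaussianMatrix n k (B1 ∪ B2 ∪ B3 ∪ B4) ≤
      ENNReal.ofReal (2 * exp (-n) + 2 * exp (-k)) := by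
    calc _ ≤ ENNReal.ofReal (exp (-n)) + ENNReal.ofReal (exp (-n)) +
          ENNReal.ofReal (exp (-k)) + ENNReal.ofReal (exp (-k)) := by
          refine (measure_union_le _ _).trans (add_le_add ?_ hB4)
          refine (measure_union_le _ _).trans (add_le_add ?_ hB3)
          exact (measure_union_le _ _).trans (add_le_add hB1 hB2)
      _ = _ := by
          rw [← ENNReal.ofReal_add (by positivity) (by positivity),
            ← ENNReal.ofReal_add (by positivity) (by positivity),
            ← ENNReal.ofReal_add (by positivity) (by positivity)]
          ring_nf
  have hgood : (B1 ∪ B2 ∪ B3 ∪ B4)ᶜ ⊆ {V : Fin n → Fin k → ℝ |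
          (∃ xt : Fin k → ℝ, (∑ j, V istar j * xt j) = 1) ∧
          1 / 384 * ((n : ℝ) / Real.sqrt k) ≤
            sInf {r : ℝ | ∃ xt : Fin k → ℝ, (∑ j, V istar j * xt j) = 1 ∧
              l1 (fun i => ∑ j, V i j * xt j) = r} ∧
          sInf {r : ℝ | ∃ xt : Fin k → ℝ, (∑ j, V istar j * xt j) = 1 ∧
              l1 (fun i => ∑ j, V i j * xt j) = r} ≤ 512 * ((n : ℝ) / Real.sqrt k)} := by
    intro V hV
    simp only [B1, B2, B3, B4, Set.mem_compl_iff, Set.mem_union, Set.mem_iUnion,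
      Set.mem_ofPred_eq, not_or, not_exists, not_le] at hV
    obtain ⟨⟨⟨h1, h2⟩, h3⟩, h4⟩ := hV
    have hup (x : EuclideanSpace ℝ (Fin k)) : imageL1 V x ≤ 8 * n * ‖x‖ := by
      have := seminorm_le_of_net (imageL1 V) (continuous_imageL1 V) hnet
        (fun u hu => (h1 u hu).le) x
      linarith
    have hlo (x : EuclideanSpace ℝ (Fin k)) : (n : ℝ) / 128 * ‖x‖ ≤ imageL1 V x := by
      have := le_seminorm_of_net (imageL1 V) hnet (by positivity) hup
        (fun u hu => (h2 u hu).le) x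
      linarith
    exact sInf_bounds hk istar V hup hlo h3.le h4.le
  refine le_trans ?_ (measure_mono hgood)
  -- Only outer-measure subadditivity is used, so no measurability of the bad event is needed.
  have htot : 1 ≤ stdGaussianMatrix n k (B1 ∪ B2 ∪ B3 ∪ B4) +
      stdGaussianMatrix n k (B1 ∪ B2 ∪ B3 ∪ B4)ᶜ := by
    rw [← measure_univ (μ := stdGaussianMatrix n k), ← Set.union_compl_self (B1 ∪ B2 ∪ B3 ∪ B4)]
    exact measure_union_le _ _
  have harith : 1 - 2 * exp (-1 * n) - 2 * exp (-1 * k) = 1 - (2 * exp (-n) + 2 * exp (-k)) := by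
    rw [neg_one_mul, neg_one_mul]; ring
  rw [harith, ENNReal.ofReal_sub _ (by positivity), ENNReal.ofReal_one, tsub_le_iff_left]
  exact htot.trans (add_le_add_left hbad _)
end

section
/- Fix η with 0 < η < 1. There exist constants c_η > 0, γ₁ > 0, γ₂ > 0 such that the following holds: if A is an n × k random matrix with i.i.d. N(0,1) entries and k ≤ η·n, then with probability at least 1 − γ₁e^{−γ₂·n}, every x ∈ ℝᵏ satisfies c_η·√n·‖Ax‖₂ ≤ ‖Ax‖₁ ≤ √n·‖Ax‖₂; that is, the ℓ₁ and ℓ₂ norms are uniformly equivalent (with these constants) on the column span of A. -/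
/-!
The upper bound is Cauchy–Schwarz. For the lower bound, fix a unit vector `y`; then `Ay` is a
standard Gaussian vector in `ℝⁿ` (`map_stdGaussianMatrix`). Since the Gaussian density is bounded,
`‖Ay‖₁` is smaller than `e^{-C} n` with probability at most `e^{(1 - C) n}` (`meas_l1_small_le`),
and for `C ≥ 4` the event `‖Ay‖₂ ≥ C √n` has probability at most `e^{(1 - C) n}` as well
(`meas_l2_large_le`).

Take `ε = e^{-C} / (4C)` and an `ε`-net of the unit sphere of `ℝᵏ` with at most
`(3 / ε)^k = (12 C e^C)^k` points (`exists_sphere_net`). As `k ≤ η n`, the logarithm of its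
cardinality is at most `n (η C + O(log C))`, so for large `C` (`exists_scale`), because `η < 1`, the
union bound over the net leaves a failure probability of at most `2 e^{-n}`. Off the exceptional
event, a deterministic approximation argument (`l1_lower_bound_of_net`) extends the two estimates
from the net to all of `ℝᵏ` and gives the theorem with `c_η = ε`.
-/

open MeasureTheory ProbabilityTheory Real

/-- ℓ² (Euclidean) norm of a vector in ℝᵐ. -/
noncomputable def l2 {m : ℕ} (x : Fin m → ℝ) : ℝ := Real.sqrt (∑ i, (x i) ^ 2)

/-! ### Gaussian tail estimates for a fixed vector -/

/-- For a unit vector `y`, the functional `⟨·, y⟩` of a standard Gaussian vector is `N(0,1)`, as its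
characteristic function shows. -/
lemma map_row_eq_gaussianReal {k : ℕ} (y : Fin k → ℝ) (hy : ∑ j, y j ^ 2 = 1) :
    (Measure.pi fun _ : Fin k => gaussianReal 0 1).map (fun a => ∑ j, a j * y j) =
      gaussianReal 0 1 := by
  apply Measure.ext_of_charFun
  ext t
  rw [charFun_apply_real, integral_map (Measurable.aemeasurable (by fun_prop))
    (Measurable.aestronglyMeasurable (by fun_prop))]
  have h1 : ∀ a : Fin k → ℝ, Complex.exp (t * ((∑ j, a j * y j : ℝ) : ℂ) * Complex.I) =
      ∏ j, Complex.exp (((t * y j : ℝ) : ℂ) * (a j : ℂ) * Complex.I) := by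
    intro a
    rw [← Complex.exp_sum]
    congr 1
    push_cast
    rw [Finset.mul_sum, Finset.sum_mul]
    exact Finset.sum_congr rfl fun j _ => by ring
  simp_rw [h1]
  rw [integral_fintype_prod_eq_prod
    (f := fun j (x : ℝ) => Complex.exp (((t * y j : ℝ) : ℂ) * (x : ℂ) * Complex.I))]
  simp_rw [← charFun_apply_real, charFun_gaussianReal, ← Complex.exp_sum]
  congr 1
  have h2 : ((∑ j, y j ^ 2 : ℝ) : ℂ) = 1 := by rw [hy]; simp
  push_cast at h2
  simp only [Complex.ofReal_zero, mul_zero, zero_mul, NNReal.coe_one, Complex.ofReal_one, one_mul,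
    zero_sub, Complex.ofReal_mul, mul_pow]
  rw [Finset.sum_neg_distrib, ← Finset.sum_div, ← Finset.mul_sum, h2, mul_one]

/-- For a fixed unit vector `y`, the image `Ay` of a Gaussian matrix is a standard Gaussian vector. -/
lemma map_stdGaussianMatrix (n : ℕ) {k : ℕ} (y : Fin k → ℝ) (hy : ∑ j, y j ^ 2 = 1) :
    (stdGaussianMatrix n k).map (fun A i => ∑ j, A i j * y j) =
      Measure.pi fun _ => gaussianReal 0 1 := by
  have hrow := map_row_eq_gaussianReal y hy
  have : ∀ _ : Fin n, SigmaFinite ((Measure.pi fun _ : Fin k => gaussianReal 0 1).map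
      (fun a => ∑ j, a j * y j)) := fun _ => by rw [hrow]; infer_instance
  refine (Measure.pi_map_pi (f := fun (_ : Fin n) (a : Fin k → ℝ) => ∑ j, a j * y j)
    (fun _ => Measurable.aemeasurable (by fun_prop))).trans ?_
  simp_rw [hrow]

/-- The standard Gaussian density is at most `exp (-x ^ 2 / 2) / 2`, because `√(2π) ≥ 2`. Upper bounds
on Gaussian expectations thus follow from Lebesgue integrals of a dominating function `g`. -/
lemma lintegral_gaussianReal_le {f g : ℝ → ℝ} {M : ℝ} (hf : Measurable f)
    (hfg : ∀ x, 1 / 2 * exp (-(x ^ 2 / 2)) * f x ≤ g x)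
    (hf0 : ∀ x, 0 ≤ f x) (hg : Integrable g) (hM : ∫ x, g x ≤ M) :
    ∫⁻ x, ENNReal.ofReal (f x) ∂(gaussianReal 0 1) ≤ ENNReal.ofReal M := by
  have hg0 : ∀ x, 0 ≤ g x := fun x => le_trans (mul_nonneg (by positivity) (hf0 x)) (hfg x)
  rw [gaussianReal_of_var_ne_zero 0 one_ne_zero,
    lintegral_withDensity_eq_lintegral_mul _ (measurable_gaussianPDF 0 1) (by fun_prop)]
  calc _ ≤ ∫⁻ x, ENNReal.ofReal (g x) := by
        refine lintegral_mono fun x => ?_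
        simp only [Pi.mul_apply, gaussianPDF]
        rw [← ENNReal.ofReal_mul (gaussianPDFReal_nonneg 0 1 x)]
        refine ENNReal.ofReal_le_ofReal (le_trans ?_ (hfg x))
        refine mul_le_mul_of_nonneg_right ?_ (hf0 x)
        have h2 : (2 : ℝ) ≤ √(2 * π) :=
          Real.le_sqrt_of_sq_le (by nlinarith [Real.pi_gt_three])
        simp only [gaussianPDFReal, NNReal.coe_one, mul_one, sub_zero]
        rw [neg_div]
        gcongr
        rw [one_div]
        gcongr
    _ = ENNReal.ofReal (∫ x, g x) :=
        (ofReal_integral_eq_lintegral_ofReal hg (Filter.Eventually.of_forall hg0)).symm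
    _ ≤ _ := ENNReal.ofReal_le_ofReal hM

lemma lintegral_exp_neg_mul_abs_le {r : ℝ} (hr : 0 < r) :
    ∫⁻ x, ENNReal.ofReal (exp (-r * |x|)) ∂(gaussianReal 0 1) ≤ ENNReal.ofReal (1 / r) := by
  have hint : ∫ x : ℝ, exp (-r * |x|) = 2 / r := by
    rw [integral_comp_abs (f := fun x => exp (-r * x)),
      integral_exp_mul_Ioi (by linarith : -r < 0)]
    simp
    ring
  have hI : Integrable fun x : ℝ => exp (-r * |x|) := by
    by_contra h
    rw [integral_undef h] at hint
    exact (by positivity : (2 / r : ℝ) ≠ 0) hint.symm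
  refine lintegral_gaussianReal_le (g := fun x => 1 / 2 * exp (-r * |x|)) (by fun_prop) ?_
    (fun x => (exp_pos _).le) (hI.const_mul _) ?_
  · intro x
    have : exp (-(x ^ 2 / 2)) ≤ 1 := Real.exp_le_one_iff.2 (by nlinarith [sq_nonneg x])
    have := exp_pos (-r * |x|)
    nlinarith
  · rw [integral_const_mul, hint]
    apply le_of_eq
    field_simp

lemma lintegral_exp_sq_div_four_le :
    ∫⁻ x, ENNReal.ofReal (exp (x ^ 2 / 4)) ∂(gaussianReal 0 1) ≤ ENNReal.ofReal 2 := by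
  refine lintegral_gaussianReal_le (g := fun x => 1 / 2 * exp (-(1 / 4) * x ^ 2)) (by fun_prop) ?_
    (fun x => (exp_pos _).le) ((integrable_exp_neg_mul_sq (by norm_num)).const_mul _) ?_
  · intro x
    rw [mul_assoc, ← Real.exp_add]
    apply le_of_eq
    ring_nf
  · rw [integral_const_mul, integral_gaussian]
    have : √(π / (1 / 4)) ≤ 4 := Real.sqrt_le_iff.2 ⟨by norm_num, by nlinarith [Real.pi_lt_four]⟩
    linarith

/-- Chernoff bound: exponential Markov inequality for a sum of functions of i.i.d. Gaussians. -/
lemma chernoff_gaussian (n : ℕ) {h : ℝ → ℝ} (hh : Measurable h) {M : ℝ} (hM0 : 0 ≤ M)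
    (hM : ∫⁻ x, ENNReal.ofReal (exp (h x)) ∂(gaussianReal 0 1) ≤ ENNReal.ofReal M) (s : ℝ) :
    (Measure.pi fun _ : Fin n => gaussianReal 0 1) {g | s ≤ ∑ i, h (g i)} ≤
      ENNReal.ofReal (exp (-s) * M ^ n) := by
  have hprod : ∫⁻ g : Fin n → ℝ, ∏ i, ENNReal.ofReal (exp (h (g i)))
      ∂(Measure.pi fun _ : Fin n => gaussianReal 0 1) ≤ ENNReal.ofReal M ^ n := by
    rw [lintegral_prod_eq_prod_lintegral_of_indepFun Finset.univ
      (fun i (g : Fin n → ℝ) => ENNReal.ofReal (exp (h (g i))))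
      (iIndepFun_pi (X := fun _ x => ENNReal.ofReal (exp (h x)))
        fun _ => Measurable.aemeasurable (by fun_prop)) (fun i => by fun_prop)]
    calc _ ≤ ∏ _i : Fin n, ENNReal.ofReal M := by
          refine Finset.prod_le_prod' fun i _ => ?_
          rw [← (measurePreserving_eval (fun _ : Fin n => gaussianReal 0 1) i).lintegral_comp
            (f := fun x => ENNReal.ofReal (exp (h x))) (by fun_prop)] at hM
          exact hM
      _ = _ := by simp
  calc _ ≤ ∫⁻ g : Fin n → ℝ, ENNReal.ofReal (exp (-s)) * ∏ i, ENNReal.ofReal (exp (h (g i)))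
        ∂(Measure.pi fun _ : Fin n => gaussianReal 0 1) := by
        refine meas_le_lintegral₀ (Measurable.aemeasurable (by fun_prop)) fun g hg => ?_
        rw [← ENNReal.ofReal_prod_of_nonneg (fun i _ => (exp_pos _).le), ← Real.exp_sum,
          ← ENNReal.ofReal_mul (exp_pos _).le, ← Real.exp_add, ENNReal.one_le_ofReal,
          Real.one_le_exp_iff]
        have : s ≤ ∑ i, h (g i) := hg
        linarith
    _ = ENNReal.ofReal (exp (-s)) * ∫⁻ g : Fin n → ℝ, ∏ i, ENNReal.ofReal (exp (h (g i)))
        ∂(Measure.pi fun _ : Fin n => gaussianReal 0 1) :=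
        lintegral_const_mul _ (by fun_prop)
    _ ≤ ENNReal.ofReal (exp (-s)) * ENNReal.ofReal M ^ n := by gcongr
    _ = _ := by rw [← ENNReal.ofReal_pow hM0, ← ENNReal.ofReal_mul (exp_pos _).le]

/-- Small-ball estimate for the `ℓ¹` norm: `Ay` has `ℓ¹` norm at most `e^{-C} n` with probability at
most `(e · e^{-C})^n`. It is the Chernoff bound for `-e^C |x|`. -/
lemma meas_l1_small_le (n : ℕ) {k : ℕ} {C : ℝ} (y : Fin k → ℝ) (hy : ∑ j, y j ^ 2 = 1) :
    stdGaussianMatrix n k {A | l1 (fun i => ∑ j, A i j * y j) ≤ exp (-C) * n} ≤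
      ENNReal.ofReal (exp (n * (1 - C))) := by
  have h := chernoff_gaussian n (h := fun x => -exp C * |x|) (by fun_prop)
    (by positivity) (lintegral_exp_neg_mul_abs_le (exp_pos C)) (-n)
  rw [← map_stdGaussianMatrix n y hy] at h
  refine (measure_mono ?_).trans ((Measure.le_map_apply
    (Measurable.aemeasurable (by fun_prop)) _).trans (h.trans (le_of_eq ?_)))
  · intro A hA
    have hA' : ∑ i, |∑ j, A i j * y j| ≤ exp (-C) * n := hA
    simp only [Set.mem_preimage, Set.mem_ofPred_eq]
    rw [← Finset.mul_sum]
    have h1 : exp C * (exp (-C) * n) = n := by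
      rw [← mul_assoc, ← Real.exp_add]; simp
    have := mul_le_mul_of_nonneg_left hA' (exp_pos C).le
    linarith
  · rw [one_div, ← Real.exp_neg, ← Real.exp_nat_mul, ← Real.exp_add]
    ring_nf

/-- Large deviation estimate for the `ℓ²` norm, from the Chernoff bound for `x ^ 2 / 4`. The Gaussian
decay `e^{-C² n / 4}` is only used in the weaker form `e^{-C n}`, matching `meas_l1_small_le`. -/
lemma meas_l2_large_le (n : ℕ) {k : ℕ} {C : ℝ} (hC : 4 ≤ C) (y : Fin k → ℝ)
    (hy : ∑ j, y j ^ 2 = 1) :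
    stdGaussianMatrix n k {A | C * √n ≤ l2 (fun i => ∑ j, A i j * y j)} ≤
      ENNReal.ofReal (exp (n * (1 - C))) := by
  have h := chernoff_gaussian n (h := fun x => x ^ 2 / 4) (by fun_prop)
    (by positivity) lintegral_exp_sq_div_four_le (C ^ 2 * n / 4)
  rw [← map_stdGaussianMatrix n y hy] at h
  refine (measure_mono ?_).trans ((Measure.le_map_apply
    (Measurable.aemeasurable (by fun_prop)) _).trans (h.trans (ENNReal.ofReal_le_ofReal ?_)))
  · intro A hA
    have hA' : C * √n ≤ √(∑ i, (∑ j, A i j * y j) ^ 2) := hA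
    simp only [Set.mem_preimage, Set.mem_ofPred_eq]
    rw [← Finset.sum_div]
    have h1 := pow_le_pow_left₀ (by positivity) hA' 2
    rw [Real.sq_sqrt (Finset.sum_nonneg fun i _ => sq_nonneg _), mul_pow,
      Real.sq_sqrt (Nat.cast_nonneg n)] at h1
    linarith
  · have h2 : (2 : ℝ) ≤ exp 1 := by linarith [Real.add_one_le_exp (1 : ℝ)]
    calc exp (-(C ^ 2 * n / 4)) * 2 ^ n ≤ exp (-(n * C)) * exp 1 ^ n := by
          have : (n : ℝ) * C ≤ C ^ 2 * n / 4 := by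
            nlinarith [mul_nonneg (mul_nonneg (Nat.cast_nonneg (α := ℝ) n) (by linarith : 0 ≤ C))
              (by linarith : 0 ≤ C - 4)]
          gcongr
      _ = _ := by
          rw [← Real.exp_nat_mul, ← Real.exp_add]; ring_nf

/-! ### Nets of the unit sphere -/

/-- Volumetric packing bound: the balls of radius `ε / 2` around an `ε`-separated subset of the unit
sphere are disjoint and contained in the ball of radius `3 / 2`. -/
lemma card_le_of_separated_sphere {E : Type*} [NormedAddCommGroup E] [NormedSpace ℝ E]
    [FiniteDimensional ℝ E] {ε : ℝ} (hε : 0 < ε) (hε1 : ε ≤ 1) (s : Finset E)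
    (hs : ∀ c ∈ s, ‖c‖ = 1) (h : ∀ c ∈ s, ∀ d ∈ s, c ≠ d → ε ≤ ‖c - d‖) :
    (s.card : ℝ) ≤ (3 / ε) ^ Module.finrank ℝ E := by
  borelize E
  let μ : Measure E := Measure.addHaar
  have hδ : 0 < ε / 2 := by linarith
  have D : Set.Pairwise (s : Set E)
      (Function.onFun Disjoint fun c => Metric.ball (c : E) (ε / 2)) := by
    rintro c hc d hd hcd
    apply Metric.ball_disjoint_ball
    rw [dist_eq_norm]
    linarith [h c hc d hd hcd]
  have hsub : (⋃ c ∈ s, Metric.ball (c : E) (ε / 2)) ⊆ Metric.ball (0 : E) (3 / 2) := by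
    refine Set.iUnion₂_subset fun x hx => Metric.ball_subset_ball' ?_
    rw [dist_zero_right, hs x hx]
    linarith
  have I : (s.card : ENNReal) * ENNReal.ofReal ((ε / 2) ^ Module.finrank ℝ E) *
      μ (Metric.ball 0 1) ≤
      ENNReal.ofReal ((3 / 2) ^ Module.finrank ℝ E) * μ (Metric.ball 0 1) :=
    calc
      _ = μ (⋃ c ∈ s, Metric.ball (c : E) (ε / 2)) := by
        rw [measure_biUnion_finset D fun c _ => measurableSet_ball]
        simp only [μ.addHaar_ball_of_pos _ hδ, Finset.sum_const, nsmul_eq_mul, mul_assoc]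
      _ ≤ μ (Metric.ball (0 : E) (3 / 2)) := measure_mono hsub
      _ = _ := by rw [μ.addHaar_ball_of_pos _ (by norm_num)]
  have J := (ENNReal.mul_le_mul_iff_left (Metric.measure_ball_pos μ _ zero_lt_one).ne'
    measure_ball_lt_top.ne).1 I
  have K := ENNReal.toReal_le_of_le_ofReal (by positivity) J
  rw [ENNReal.toReal_mul, ENNReal.toReal_natCast, ENNReal.toReal_ofReal (by positivity),
    ← le_div_iff₀ (by positivity), ← div_pow] at K
  rwa [div_div_div_cancel_right₀ (by norm_num)] at K

/-- A maximal `ε`-separated subset of the unit sphere is an `ε`-net. -/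
lemma exists_sphere_net {E : Type*} [NormedAddCommGroup E] [NormedSpace ℝ E]
    [FiniteDimensional ℝ E] {ε : ℝ} (hε : 0 < ε) (hε1 : ε ≤ 1) :
    ∃ s : Finset E, (∀ c ∈ s, ‖c‖ = 1) ∧ (s.card : ℝ) ≤ (3 / ε) ^ Module.finrank ℝ E ∧
      ∀ x : E, ‖x‖ = 1 → ∃ c ∈ s, ‖x - c‖ ≤ ε := by
  classical
  let P : Finset E → Prop := fun s =>
    (∀ c ∈ s, ‖c‖ = 1) ∧ ∀ c ∈ s, ∀ d ∈ s, c ≠ d → ε ≤ ‖c - d‖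
  have hbound : ∀ s, P s → (s.card : ℝ) ≤ (3 / ε) ^ Module.finrank ℝ E :=
    fun s hs => card_le_of_separated_sphere hε hε1 s hs.1 hs.2
  have hne : (Finset.card '' {s | P s}).Nonempty := ⟨0, ∅, by simp [P], rfl⟩
  have hbdd : BddAbove (Finset.card '' {s | P s}) := by
    refine ⟨⌊(3 / ε) ^ Module.finrank ℝ E⌋₊, ?_⟩
    rintro _ ⟨s, hs, rfl⟩
    exact Nat.le_floor (hbound s hs)
  obtain ⟨s, hs, hmax⟩ := Nat.sSup_mem hne hbdd
  have hs' : P s := hs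
  refine ⟨s, hs'.1, hbound s hs', fun x hx => ?_⟩
  by_contra! hfar
  have hxs : x ∉ s := fun hmem => by
    have := hfar x hmem
    simp at this
    linarith
  have hP : P (insert x s) := by
    refine ⟨fun c hc => ?_, fun c hc d hd hcd => ?_⟩
    · rcases Finset.mem_insert.1 hc with rfl | hc
      · exact hx
      · exact hs'.1 c hc
    · rcases Finset.mem_insert.1 hc with hc | hc <;> rcases Finset.mem_insert.1 hd with hd | hd
      · exact absurd (hc.trans hd.symm) hcd
      · exact hc ▸ (hfar d hd).le
      · rw [norm_sub_rev]; exact hd ▸ (hfar c hc).le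
      · exact hs'.2 c hc d hd hcd
  have := le_csSup hbdd (Set.mem_image_of_mem _ hP)
  rw [← hmax, Finset.card_insert_of_notMem hxs] at this
  omega

/-! ### From the net to the whole space -/

lemma l1_le_sqrt_mul_l2 {n : ℕ} (z : Fin n → ℝ) : l1 z ≤ √n * l2 z := by
  rw [l1, l2, ← Real.sqrt_mul (Nat.cast_nonneg n)]
  apply Real.le_sqrt_of_sq_le
  simpa using sq_sum_le_card_mul_sum_sq (s := Finset.univ) (f := fun i => |z i|)

lemma l2_eq_norm {n : ℕ} (z : EuclideanSpace ℝ (Fin n)) : l2 (fun i => z i) = ‖z‖ := by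
  simp [l2, EuclideanSpace.norm_eq]

lemma l1_smul_s8 {n : ℕ} (a : ℝ) (z : EuclideanSpace ℝ (Fin n)) :
    l1 (fun i => (a • z) i) = |a| * l1 (fun i => z i) := by
  simp [l1, abs_mul, Finset.mul_sum]

lemma l1_sub_le {n : ℕ} (z w : EuclideanSpace ℝ (Fin n)) :
    l1 (fun i => w i) - √n * ‖z - w‖ ≤ l1 (fun i => z i) := by
  have h1 := l1_le_sqrt_mul_l2 (fun i => (z - w) i)
  rw [l2_eq_norm] at h1
  have h2 : l1 (fun i => w i) ≤ l1 (fun i => z i) + l1 (fun i => (z - w) i) := by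
    simp only [l1, ← Finset.sum_add_distrib]
    refine Finset.sum_le_sum fun i _ => ?_
    rw [PiLp.sub_apply]
    have := abs_sub_abs_le_abs_sub (w i) (z i)
    rw [abs_sub_comm] at this
    linarith
  linarith

/-- Deterministic step. Upper `ℓ²` bounds on a net of mesh at most `1 / 2` give `‖T‖ ≤ 2C√n`; then
moving from a net point to a nearby unit vector changes the `ℓ¹` norm by at most
`√n · 2C√n · ε = c n / 2`, so the lower `ℓ¹` bound survives on the whole space. -/
lemma l1_lower_bound_of_net {E : Type*} [NormedAddCommGroup E] [NormedSpace ℝ E] {n : ℕ}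
    (T : E →L[ℝ] EuclideanSpace ℝ (Fin n)) {C c ε : ℝ} (hC : 0 < C) (hc : 0 < c)
    (hε : ε = c / (4 * C)) (hε2 : ε ≤ 1 / 2) (s : Finset E)
    (hnet : ∀ x : E, ‖x‖ = 1 → ∃ y ∈ s, ‖x - y‖ ≤ ε)
    (hl2 : ∀ y ∈ s, ‖T y‖ ≤ C * √n) (hl1 : ∀ y ∈ s, c * n ≤ l1 (fun i => T y i)) (x : E) :
    ε * √n * ‖T x‖ ≤ l1 (fun i => T x i) := by
  have hε0 : 0 < ε := by rw [hε]; positivity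
  have hnorm : ‖T‖ ≤ 2 * C * √n := by
    have h : ‖T‖ ≤ C * √n + ‖T‖ * ε := by
      refine ContinuousLinearMap.opNorm_le_of_unit_norm (by positivity) fun x hx => ?_
      obtain ⟨y, hy, hxy⟩ := hnet x hx
      calc ‖T x‖ = ‖T y + T (x - y)‖ := by rw [← map_add]; simp
        _ ≤ ‖T y‖ + ‖T (x - y)‖ := norm_add_le _ _
        _ ≤ C * √n + ‖T‖ * ε := add_le_add (hl2 y hy) (T.le_opNorm_of_le hxy)
    nlinarith [norm_nonneg T]
  have hn : √(n : ℝ) * √n = n := Real.mul_self_sqrt (Nat.cast_nonneg n)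
  have hunit : ∀ x : E, ‖x‖ = 1 → ε * √n * ‖T x‖ ≤ l1 (fun i => T x i) := by
    intro x hx
    obtain ⟨y, hy, hxy⟩ := hnet x hx
    have h1 := l1_sub_le (T x) (T y)
    rw [← map_sub] at h1
    have h2 : ‖T (x - y)‖ ≤ 2 * C * √n * ε :=
      (T.le_opNorm_of_le hxy).trans (mul_le_mul_of_nonneg_right hnorm hε0.le)
    have h3 : ‖T x‖ ≤ 2 * C * √n := by
      simpa using (T.le_opNorm_of_le hx.le).trans (mul_le_mul_of_nonneg_right hnorm zero_le_one)
    have h4 := hl1 y hy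
    have h5 : √n * ‖T (x - y)‖ ≤ c / 2 * n := by
      calc √n * ‖T (x - y)‖ ≤ √n * (2 * C * √n * ε) := by gcongr
        _ = (√n * √n) * (2 * C * ε) := by ring
        _ = c / 2 * n := by rw [hn, hε]; field_simp; ring
    have h6 : ε * √n * ‖T x‖ ≤ c / 2 * n := by
      calc ε * √n * ‖T x‖ ≤ ε * √n * (2 * C * √n) := by gcongr
        _ = (√n * √n) * (2 * C * ε) := by ring
        _ = c / 2 * n := by rw [hn, hε]; field_simp; ring
    linarith
  rcases eq_or_ne x 0 with rfl | hx
  · simp [l1]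
  have h := hunit (‖x‖⁻¹ • x) (norm_smul_inv_norm hx)
  have hx0 : 0 < ‖x‖⁻¹ := inv_pos.2 (norm_pos_iff.2 hx)
  rw [map_smul, l1_smul_s8, norm_smul, Real.norm_eq_abs, abs_of_pos hx0] at h
  refine le_of_mul_le_mul_left ?_ hx0
  linarith

/-! ### The choice of scale and the union bound -/

/-- The scale `C` at which the decay `e^{(1 - C) n}` beats the net cardinality `(12 C e^C)^{η n}` by a
factor `e^{-n}`. It exists because the net costs only `η C + O(log C)` per coordinate, and `η < 1`. -/
lemma exists_scale {η : ℝ} (hη0 : 0 < η) (hη1 : η < 1) :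
    ∃ C : ℝ, 4 ≤ C ∧ η * (log (12 * C) + C) + 2 ≤ C := by
  have hb : 0 < 1 - η := by linarith
  set b := 1 - η with hbdef
  set C := 24 * exp 2 / b ^ 2 + 4 with hCdef
  have hC4 : 4 ≤ C := by have : 0 < 24 * exp 2 / b ^ 2 := by positivity
                         linarith
  have hC0 : 0 < C := by linarith
  refine ⟨C, hC4, ?_⟩
  have hlog : log (12 * C) + 2 ≤ b * C := by
    have h1 := Real.quadratic_le_exp_of_nonneg (mul_pos hb hC0).le
    -- The choice of `C` makes the quadratic term of `exp (b * C)` dominate `12 * C * exp 2`.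
    have h2 : 12 * C * exp 2 ≤ exp (b * C) := by
      have h3 : 24 * exp 2 ≤ b ^ 2 * C := by
        rw [hCdef, mul_add, mul_div_cancel₀ _ (by positivity)]
        nlinarith [sq_nonneg b]
      nlinarith [mul_pos hb hC0]
    have h4 := Real.log_le_log (by positivity) h2
    rw [Real.log_mul (by positivity) (by positivity), Real.log_exp, Real.log_exp] at h4
    exact h4
  have hl0 : 0 ≤ log (12 * C) := Real.log_nonneg (by linarith)
  nlinarith

/-- Fix `0 < η < 1`.  There exist constants `c_η, γ₁, γ₂ > 0` such that: if
`A` is an `n × k` random matrix with i.i.d. N(0,1) entries and `k ≤ η n`, then with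
probability at least `1 − γ₁ e^{−γ₂ n}`, every `x ∈ ℝᵏ` satisfies
`c_η √n ‖Ax‖₂ ≤ ‖Ax‖₁ ≤ √n ‖Ax‖₂`, i.e. the ℓ¹ and ℓ² norms are uniformly equivalent on the
column span of `A`. -/
theorem l1_l2_equivalence_random_subspace {η : ℝ} (hη0 : 0 < η) (hη1 : η < 1) :
    ∃ cη γ₁ γ₂ : ℝ, 0 < cη ∧ 0 < γ₁ ∧ 0 < γ₂ ∧
    ∀ n k : ℕ, (k : ℝ) ≤ η * n →
      stdGaussianMatrix n k
        {A : Fin n → Fin k → ℝ | ∀ x : Fin k → ℝ,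
          cη * Real.sqrt n * l2 (fun i => ∑ j, A i j * x j) ≤
            l1 (fun i => ∑ j, A i j * x j) ∧
          l1 (fun i => ∑ j, A i j * x j) ≤
            Real.sqrt n * l2 (fun i => ∑ j, A i j * x j)} ≥
      ENNReal.ofReal (1 - γ₁ * Real.exp (-γ₂ * n)) := by
  obtain ⟨C, hC4, hC⟩ := exists_scale hη0 hη1
  have hC0 : 0 < C := by linarith
  set ε := exp (-C) / (4 * C) with hε
  have hε0 : 0 < ε := by positivity
  have hε2 : ε ≤ 1 / 2 := by
    rw [hε, div_le_iff₀ (by positivity)]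
    have : exp (-C) ≤ 1 := Real.exp_le_one_iff.2 (by linarith)
    linarith
  refine ⟨ε, 2, 1, hε0, two_pos, one_pos, fun n k hk => ?_⟩
  obtain ⟨s, hs1, hscard, hsnet⟩ :=
    exists_sphere_net (E := EuclideanSpace ℝ (Fin k)) hε0 (by linarith)
  rw [finrank_euclideanSpace_fin] at hscard
  have hcard : (s.card : ℝ) ≤ exp (n * (C - 2)) := by
    have h3ε : 3 / ε = exp (log (12 * C) + C) := by
      rw [Real.exp_add, Real.exp_log (by positivity), hε, Real.exp_neg]
      field
    refine hscard.trans ?_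
    rw [h3ε, ← Real.exp_nat_mul, Real.exp_le_exp]
    have hl0 : 0 ≤ log (12 * C) := Real.log_nonneg (by linarith)
    calc (k : ℝ) * (log (12 * C) + C) ≤ η * n * (log (12 * C) + C) := by gcongr
      _ = n * (η * (log (12 * C) + C)) := by ring
      _ ≤ n * (C - 2) := by gcongr; linarith
  have hsq : ∀ y ∈ s, ∑ j, y j ^ 2 = 1 := fun y hy => by
    rw [← EuclideanSpace.real_norm_sq_eq, hs1 y hy, one_pow]
  have : IsProbabilityMeasure (stdGaussianMatrix n k) := by
    unfold stdGaussianMatrix; infer_instance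
  set G := {A : Fin n → Fin k → ℝ | ∀ x : Fin k → ℝ,
    ε * √n * l2 (fun i => ∑ j, A i j * x j) ≤ l1 (fun i => ∑ j, A i j * x j) ∧
    l1 (fun i => ∑ j, A i j * x j) ≤ √n * l2 (fun i => ∑ j, A i j * x j)} with hG
  -- The event that one of the two norm estimates fails at the net point `y`.
  let bad : EuclideanSpace ℝ (Fin k) → Set (Fin n → Fin k → ℝ) := fun y =>
    {A | l1 (fun i => ∑ j, A i j * y j) ≤ exp (-C) * n} ∪
      {A | C * √n ≤ l2 (fun i => ∑ j, A i j * y j)}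
  -- `G` is not known to be measurable, so its complement is covered by a finite union and the
  -- estimate is concluded by subadditivity of the outer measure.
  have hsub : Gᶜ ⊆ ⋃ y ∈ s, bad y := by
    intro A hA
    by_contra hbad
    refine hA fun x => ⟨?_, l1_le_sqrt_mul_l2 _⟩
    simp only [bad, Set.mem_iUnion, Set.mem_union, Set.mem_ofPred_eq, not_exists, not_or,
      not_le] at hbad
    let T : EuclideanSpace ℝ (Fin k) →L[ℝ] EuclideanSpace ℝ (Fin n) :=
      LinearMap.toContinuousLinearMap (Matrix.toEuclideanLin (Matrix.of A))
    have hT : ∀ (z : EuclideanSpace ℝ (Fin k)) (i : Fin n), T z i = ∑ j, A i j * z j :=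
      fun z i => rfl
    have h := l1_lower_bound_of_net T hC0 (exp_pos (-C)) hε hε2 s hsnet
      (fun y hy => by rw [← l2_eq_norm]; simp_rw [hT]; exact (hbad y hy).2.le)
      (fun y hy => by simp_rw [hT]; exact (hbad y hy).1.le) (WithLp.toLp 2 x)
    rw [← l2_eq_norm] at h
    simpa only [hT] using h
  have hGc : stdGaussianMatrix n k Gᶜ ≤ ENNReal.ofReal (2 * exp (-1 * n)) := by
    calc stdGaussianMatrix n k Gᶜ ≤ ∑ y ∈ s, stdGaussianMatrix n k (bad y) :=
          (measure_mono hsub).trans (measure_biUnion_finset_le s bad)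
      _ ≤ ∑ _y ∈ s, ENNReal.ofReal (2 * exp (n * (1 - C))) := by
          refine Finset.sum_le_sum fun y hy => (measure_union_le _ _).trans ?_
          rw [two_mul, ENNReal.ofReal_add (exp_pos _).le (exp_pos _).le]
          exact add_le_add (meas_l1_small_le n y (hsq y hy)) (meas_l2_large_le n hC4 y (hsq y hy))
      _ = ENNReal.ofReal (s.card * (2 * exp (n * (1 - C)))) := by
          rw [Finset.sum_const, nsmul_eq_mul, ENNReal.ofReal_mul (Nat.cast_nonneg _),
            ENNReal.ofReal_natCast]
      _ ≤ ENNReal.ofReal (exp (n * (C - 2)) * (2 * exp (n * (1 - C)))) := by gcongr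
      _ = ENNReal.ofReal (2 * exp (-1 * n)) := by
          rw [mul_left_comm, ← Real.exp_add]
          ring_nf
  have htot : 1 ≤ stdGaussianMatrix n k G + stdGaussianMatrix n k Gᶜ := by
    rw [← measure_univ (μ := stdGaussianMatrix n k), ← Set.union_compl_self G]
    exact measure_union_le _ _
  rw [ge_iff_le, ENNReal.ofReal_sub _ (by positivity), ENNReal.ofReal_one]
  exact tsub_le_iff_right.2 (htot.trans (by gcongr))
end
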